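/- arXiv:1210.1669 — 3 statements merged into one kernel-verified Lean document; each statement's English description precedes it below -/
import Mathlib

section
/- For every a ∈ I = {1,…,r}, the quantum dimension solution (z^{(a)}_m) of type D_r satisfies: (1) positivity: z^{(a)}_m > 0 for 0 ≤ m ≤ k; (2) symmetry: z^{(a)}_m = z^{(a)}_{k−m} for 1 ≤ m ≤ k−1; (3) unit boundary condition: z^{(a)}_k = 1; (4) unimodality: z^{(a)}_{m−1} < z^{(a)}_m for 1 ≤ m ≤ ⌊k/2⌋. -/
/-- Orthogonal coordinates `u_i(λ)` of `λ + ρ` for the weight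
`λ = λ_1 ω_1 + ⋯ + λ_r ω_r` of `D_r` given in fundamental-weight coordinates. -/
noncomputable def uCoord (r : ℕ) (lam : ℕ → ℤ) (i : ℕ) : ℝ :=
  if i = r then ((lam r : ℝ) - (lam (r - 1) : ℝ)) / 2
  else (∑ j ∈ Finset.Icc i (r - 2), (lam j : ℝ))
      + ((lam (r - 1) : ℝ) + (lam r : ℝ)) / 2 + ((r : ℝ) - (i : ℝ))

/-- The level-`k` quantum dimension of the weight `λ` of `D_r`
(`h = 2r - 2` is the Coxeter number), given by the product over the
positive roots `e_i - e_j`, `e_i + e_j` (`1 ≤ i < j ≤ r`). -/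
noncomputable def qdimD (r k : ℕ) (lam : ℕ → ℤ) : ℝ :=
  ∏ p ∈ (Finset.Icc 1 r ×ˢ Finset.Icc 1 r).filter (fun p => p.1 < p.2),
    (Real.sin (Real.pi * (uCoord r lam p.1 - uCoord r lam p.2) / (2 * (r : ℝ) - 2 + (k : ℝ)))
      * Real.sin (Real.pi * (uCoord r lam p.1 + uCoord r lam p.2) / (2 * (r : ℝ) - 2 + (k : ℝ))))
    / (Real.sin (Real.pi * ((p.2 : ℝ) - (p.1 : ℝ)) / (2 * (r : ℝ) - 2 + (k : ℝ)))
      * Real.sin (Real.pi * (2 * (r : ℝ) - (p.1 : ℝ) - (p.2 : ℝ)) / (2 * (r : ℝ) - 2 + (k : ℝ))))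

/-- The quantum dimension solution `z^{(a)}_m` of the `Q`-system of type `D_r`:
the specialization `Q^{(a)}_m(ρ/(h+k))` of the classical characters of the
Kirillov–Reshetikhin modules of type `D_r`. -/
noncomputable def zD (r k a m : ℕ) : ℝ :=
  if a = r - 1 ∨ a = r then
    qdimD r k (fun j => if j = a then (m : ℤ) else 0)
  else if a % 2 = 1 then
    ∑ c ∈ (Fintype.piFinset (fun _ : Fin ((a + 1) / 2) => Finset.range (m + 1))).filter
        (fun c => ∑ i, c i = m),
      qdimD r k (fun j => ∑ i : Fin ((a + 1) / 2), if j = 2 * (i : ℕ) + 1 then (c i : ℤ) else 0)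
  else
    ∑ c ∈ (Fintype.piFinset (fun _ : Fin (a / 2) => Finset.range (m + 1))).filter
        (fun c => ∑ i, c i ≤ m),
      qdimD r k (fun j => ∑ i : Fin (a / 2), if j = 2 * (i : ℕ) + 2 then (c i : ℤ) else 0)

namespace QuantumDimD

open Finset

/-- The product of `f x y` over the pairs `y < x` of elements of `S`. -/
noncomputable def pairProd (f : ℕ → ℕ → ℝ) (S : Finset ℕ) : ℝ :=
  ∏ x ∈ S, ∏ y ∈ S with y < x, f x y

lemma pairProd_insert_of_forall_lt (f : ℕ → ℕ → ℝ) {S : Finset ℕ} {x : ℕ}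
    (h : ∀ y ∈ S, y < x) : pairProd f (insert x S) = pairProd f S * ∏ y ∈ S, f x y := by
  have hx : x ∉ S := fun hx => (h x hx).false
  unfold pairProd
  rw [prod_insert hx, mul_comm]
  congr 1
  · refine prod_congr rfl fun y hy => ?_
    rw [filter_insert, if_neg (h y hy).le.not_gt]
  · rw [filter_insert, if_neg (lt_irrefl x), filter_true_of_mem h]

lemma pairProd_insert_of_symm {f : ℕ → ℕ → ℝ} (hf : ∀ x y, f x y = f y x) {S : Finset ℕ} {x : ℕ}
    (hx : x ∉ S) : pairProd f (insert x S) = pairProd f S * ∏ y ∈ S, f x y := by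
  unfold pairProd
  simp only [prod_filter]
  rw [prod_insert hx]
  simp only [prod_insert hx, lt_irrefl, if_false, one_mul]
  rw [mul_comm, prod_mul_distrib, mul_comm (∏ y ∈ S, _) (∏ y ∈ S, _), mul_assoc,
    ← prod_mul_distrib]
  congr 1
  refine prod_congr rfl fun y hy => ?_
  rcases lt_trichotomy x y with h | h | h
  · simp [h, h.le.not_gt, hf x y]
  · exact absurd (h ▸ hy) hx
  · simp [h, h.le.not_gt]

lemma pairProd_image (f : ℕ → ℕ → ℝ) {u : ℕ → ℕ} {I : Finset ℕ} (hu : StrictAntiOn u I) :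
    pairProd f (I.image u) = ∏ p ∈ (I ×ˢ I).filter (fun p => p.1 < p.2), f (u p.1) (u p.2) := by
  unfold pairProd
  simp only [prod_filter]
  rw [prod_product, prod_image hu.injOn]
  refine prod_congr rfl fun i hi => ?_
  rw [prod_image hu.injOn]
  refine prod_congr rfl fun j hj => ?_
  simp only [hu.lt_iff_gt hj hi]

lemma sum_powersetCard_insert {A : Finset ℕ} {x : ℕ} (hx : x ∉ A) (F : Finset ℕ → ℝ) (s : ℕ) :
    ∑ S ∈ powersetCard (s + 1) (insert x A), F S
      = ∑ S ∈ powersetCard (s + 1) A, F S + ∑ S ∈ powersetCard s A, F (insert x S) := by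
  have hmem : ∀ n, ∀ S ∈ powersetCard n A, x ∉ S := fun n S hS h =>
    hx ((mem_powersetCard.1 hS).1 h)
  rw [powersetCard_succ_insert hx, sum_union, sum_image]
  · intro S hS T hT hST
    rw [← erase_insert (hmem _ S hS), hST, erase_insert (hmem _ T hT)]
  · rw [disjoint_left]
    intro S hS hS'
    obtain ⟨T, -, rfl⟩ := mem_image.1 hS'
    exact hmem _ _ hS (mem_insert_self _ _)

/-- Subsets of a set enlarged by an interval symmetric under `p ↦ N - 1 - p` contribute nothing to
the sum of a function which is odd under this reflection. -/
lemma sum_powersetCard_union_Ico {N : ℕ} {F : Finset ℕ → ℝ}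
    (hodd : ∀ S q q', q + q' + 1 = N → q ∉ S → q' ∉ S → F (insert q' S) = -F (insert q S))
    (hzero : ∀ S q q', q + q' + 1 = N → q ≠ q' → q ∉ S → q' ∉ S →
      F (insert q (insert q' S)) = 0) :
    ∀ (d M : ℕ) (A : Finset ℕ), 2 * M + d = N → Disjoint A (Ico M (M + d)) → ∀ s : ℕ,
      ∑ S ∈ powersetCard s (A ∪ Ico M (M + d)), F S = ∑ S ∈ powersetCard s A, F S := by
  intro d
  induction d using Nat.strong_induction_on with
  | _ d ih =>
  intro M A hN hA s
  rw [disjoint_right] at hA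
  simp only [mem_Ico] at hA
  match d, ih, hN, hA with
  | 0, _, _, _ => simp
  | 1, _, hN, hA =>
    have hM : M ∉ A := hA ⟨le_rfl, by omega⟩
    have : A ∪ Ico M (M + 1) = insert M A := by
      ext x; simp only [mem_union, mem_Ico, mem_insert]; grind
    rw [this]
    cases s with
    | zero => simp
    | succ s =>
      rw [sum_powersetCard_insert hM]
      suffices h : ∑ S ∈ powersetCard s A, F (insert M S) = 0 by rw [h, add_zero]
      refine sum_eq_zero fun S hS => ?_
      have hMS : M ∉ S := fun h => hM ((mem_powersetCard.1 hS).1 h)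
      have := hodd S M M (by omega) hMS hMS
      linarith
  | d + 2, ih, hN, hA =>
    have hM : M ∉ A := hA ⟨le_rfl, by omega⟩
    have hM' : M + d + 1 ∉ A := hA ⟨by omega, by omega⟩
    have hM'' : M ∉ insert (M + d + 1) A := by
      simp only [mem_insert, not_or]; exact ⟨by omega, hM⟩
    have hset : A ∪ Ico M (M + (d + 2))
        = insert M (insert (M + d + 1) A) ∪ Ico (M + 1) (M + 1 + d) := by
      ext x; simp only [mem_union, mem_Ico, mem_insert]; grind
    rw [hset, ih d (by omega) (M + 1) _ (by omega)]
    swap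
    · rw [disjoint_right]
      intro x hx
      simp only [mem_Ico] at hx
      simp only [mem_insert, not_or]
      exact ⟨by omega, by omega, hA ⟨by omega, by omega⟩⟩
    cases s with
    | zero => simp
    | succ s =>
      rw [sum_powersetCard_insert hM'', sum_powersetCard_insert hM']
      have key : ∑ S ∈ powersetCard s (insert (M + d + 1) A), F (insert M S)
          = ∑ S ∈ powersetCard s A, F (insert M S) := by
        cases s with
        | zero => simp
        | succ s =>
          rw [sum_powersetCard_insert hM']
          suffices h : ∑ S ∈ powersetCard s A, F (insert M (insert (M + d + 1) S)) = 0 by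
            rw [h, add_zero]
          refine sum_eq_zero fun S hS => ?_
          have hS := (mem_powersetCard.1 hS).1
          exact hzero S M (M + d + 1) (by omega) (by omega) (fun h => hM (hS h))
            (fun h => hM' (hS h))
      rw [key, add_assoc, ← sum_add_distrib]
      suffices h : ∑ S ∈ powersetCard s A, (F (insert (M + d + 1) S) + F (insert M S)) = 0 by
        rw [h, add_zero]
      refine sum_eq_zero fun S hS => ?_
      have hS := (mem_powersetCard.1 hS).1
      rw [hodd S M (M + d + 1) (by omega) (fun h => hM (hS h)) (fun h => hM' (hS h))]
      ring

lemma exists_adjacent_of_card {s a : ℕ} {S : Finset ℕ} (hS : S ⊆ Ico a (a + 2 * s))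
    (hcard : S.card = s + 1) : ∃ p ∈ S, p + 1 ∈ S := by
  obtain ⟨x, hx, y, hy, hne, hxy⟩ := exists_ne_map_eq_of_card_lt_of_maps_to
    (s := S) (t := range s) (f := fun p => (p - a) / 2) (by simp [hcard])
    (fun p hp => by have := mem_Ico.1 (hS hp); simp only [coe_range, Set.mem_Iio]; omega)
  have := mem_Ico.1 (hS hx)
  have := mem_Ico.1 (hS hy)
  rcases Nat.lt_or_gt_of_ne hne with h | h
  · exact ⟨x, hx, by convert hy using 1; omega⟩
  · exact ⟨y, hy, by convert hx using 1; omega⟩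

/-- The tuples of `s` natural numbers with sum at most `m`. -/
def tuplesLE (s m : ℕ) : Finset (Fin s → ℕ) :=
  (Fintype.piFinset fun _ => range (m + 1)).filter fun c => ∑ i, c i ≤ m

lemma mem_tuplesLE {s m : ℕ} {c : Fin s → ℕ} : c ∈ tuplesLE s m ↔ ∑ i, c i ≤ m := by
  simp only [tuplesLE, mem_filter, Fintype.mem_piFinset, mem_range, and_iff_right_iff_imp]
  intro h i
  have := single_le_sum (f := c) (fun _ _ => Nat.zero_le _) (mem_univ i)
  omega

lemma tuplesLE_mono (s : ℕ) {m m' : ℕ} (h : m ≤ m') : tuplesLE s m ⊆ tuplesLE s m' :=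
  fun _ hc => mem_tuplesLE.2 ((mem_tuplesLE.1 hc).trans h)

/-- The tuples of `s` natural numbers with sum `m`. -/
def tuplesEq (s m : ℕ) : Finset (Fin s → ℕ) :=
  (Fintype.piFinset fun _ => range (m + 1)).filter fun c => ∑ i, c i = m

lemma mem_tuplesEq {s m : ℕ} {c : Fin s → ℕ} : c ∈ tuplesEq s m ↔ ∑ i, c i = m := by
  simp only [tuplesEq, mem_filter, Fintype.mem_piFinset, mem_range, and_iff_right_iff_imp]
  intro h i
  have := single_le_sum (f := c) (fun _ _ => Nat.zero_le _) (mem_univ i)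
  omega

lemma sum_tuplesEq_succ (s m : ℕ) (f : (Fin s → ℕ) → ℝ) :
    ∑ c ∈ tuplesEq (s + 1) m, f (Fin.tail c) = ∑ c ∈ tuplesLE s m, f c := by
  refine sum_nbij' Fin.tail (fun c => Fin.cons (m - ∑ i, c i) c) ?_ ?_ ?_ ?_ ?_
  · intro c hc
    rw [mem_tuplesEq, Fin.sum_univ_succ] at hc
    rw [mem_tuplesLE]
    simp only [Fin.tail]
    omega
  · intro c hc
    rw [mem_tuplesLE] at hc
    rw [mem_tuplesEq, Fin.sum_univ_succ]
    simp only [Fin.cons_zero, Fin.cons_succ]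
    omega
  · intro c hc
    rw [mem_tuplesEq, Fin.sum_univ_succ] at hc
    have : m - ∑ i, Fin.tail c i = c 0 := by simp only [Fin.tail]; omega
    simp only [this, Fin.cons_self_tail]
  · intro c _; simp
  · intro c _; rfl

lemma sum_tuplesLE_succ (s m : ℕ) (f : (Fin s → ℕ) → ℝ) :
    ∑ c ∈ tuplesLE s (m + 1), f c = ∑ c ∈ tuplesLE s m, f c + ∑ c ∈ tuplesEq s (m + 1), f c := by
  rw [← sum_union]
  · refine sum_congr ?_ fun _ _ => rfl
    ext c
    simp only [mem_union, mem_tuplesLE, mem_tuplesEq]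
    omega
  · rw [disjoint_left]
    intro c hc
    rw [mem_tuplesLE] at hc
    rw [mem_tuplesEq]
    omega

/-- The lower ends `p` of the consecutive pairs `p, p + 1` of coordinates attached to a tuple of
multiplicities, the coordinates below `lo` being left in place. -/
def pairBase (lo : ℕ) : (s : ℕ) → (Fin s → ℕ) → Finset ℕ
  | 0, _ => ∅
  | s + 1, c => insert (lo + 2 * s + ∑ i, c i) (pairBase lo s (Fin.tail c))

/-- The coordinates below `lo`, together with the consecutive pairs attached to a tuple. -/
def pairSet (lo : ℕ) : (s : ℕ) → (Fin s → ℕ) → Finset ℕ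
  | 0, _ => range lo
  | s + 1, c => insert (lo + 2 * s + ∑ i, c i + 1)
      (insert (lo + 2 * s + ∑ i, c i) (pairSet lo s (Fin.tail c)))

lemma sum_tail_le {s : ℕ} (c : Fin (s + 1) → ℕ) : ∑ i, Fin.tail c i ≤ ∑ i, c i := by
  rw [Fin.sum_univ_succ c]; simp [Fin.tail]

lemma lt_of_mem_pairBase {lo s : ℕ} {c : Fin s → ℕ} {p : ℕ} (h : p ∈ pairBase lo s c) :
    p + 1 < lo + 2 * s + ∑ i, c i := by
  induction s with
  | zero => simp [pairBase] at h
  | succ s ih =>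
    rw [pairBase, mem_insert] at h
    rcases h with rfl | h
    · omega
    · have := ih h
      have := sum_tail_le c
      omega

lemma lt_of_mem_pairSet {lo s : ℕ} {c : Fin s → ℕ} {p : ℕ} (h : p ∈ pairSet lo s c) :
    p < lo + 2 * s + ∑ i, c i := by
  induction s with
  | zero => simpa [pairSet] using h
  | succ s ih =>
    rw [pairSet, mem_insert, mem_insert] at h
    rcases h with rfl | rfl | h
    · omega
    · omega
    · have := ih h
      have := sum_tail_le c
      omega

lemma range_subset_pairSet (lo s : ℕ) (c : Fin s → ℕ) : range lo ⊆ pairSet lo s c := by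
  induction s with
  | zero => simp [pairSet]
  | succ s ih =>
    rw [pairSet]
    exact (ih _).trans ((subset_insert _ _).trans (subset_insert _ _))

lemma pairSet_zero (lo s : ℕ) : pairSet lo s 0 = range (lo + 2 * s) := by
  induction s with
  | zero => simp [pairSet]
  | succ s ih =>
    have : Fin.tail (0 : Fin (s + 1) → ℕ) = 0 := rfl
    rw [pairSet, this, ih]
    simp only [Pi.zero_apply, sum_const_zero, add_zero]
    rw [← range_add_one, ← range_add_one]
    rfl

lemma sum_powersetCard_Ico_succ {F : Finset ℕ → ℝ}
    (hF : ∀ S p, p ∈ S → p + 1 ∈ S → F S = 0) (s l b : ℕ) (hb : l ≤ b) :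
    ∑ S ∈ powersetCard (s + 1) (Ico l (b + 1)), F S
      = ∑ S ∈ powersetCard (s + 1) (Ico l b), F S
        + ∑ S ∈ powersetCard s (Ico l (b - 1)), F (insert b S) := by
  rw [← insert_Ico_right_eq_Ico_add_one hb, sum_powersetCard_insert (by simp)]
  congr 1
  symm
  refine sum_subset (powersetCard_mono (Ico_subset_Ico_right (by omega))) fun S hS hS' => ?_
  rw [mem_powersetCard] at hS hS'
  have : b - 1 ∈ S ∧ 0 < b := by
    by_contra hcon
    refine hS' ⟨fun x hx => ?_, hS.2⟩
    have h1 := mem_Ico.1 (hS.1 hx)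
    have h2 : x ≠ b - 1 := by
      rintro rfl
      exact hcon ⟨hx, by omega⟩
    exact mem_Ico.2 ⟨h1.1, by omega⟩
  refine hF _ (b - 1) (mem_insert_of_mem this.1) ?_
  rw [Nat.sub_add_cancel this.2]
  exact mem_insert_self _ _

/-- Summation over tuples is summation over all sets of pair positions, as long as overlapping
pairs do not contribute. -/
lemma sum_tuplesLE_pairBase (l s m : ℕ) (F : Finset ℕ → ℝ)
    (hF : ∀ S p, p ∈ S → p + 1 ∈ S → F S = 0) :
    ∑ c ∈ tuplesLE s m, F (pairBase (l + 1) s c)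
      = ∑ S ∈ powersetCard s (Ico (l + 1) (l + 2 * s + m)), F S := by
  induction s generalizing m F with
  | zero =>
    simp only [pairBase, powersetCard_zero, sum_singleton, sum_const]
    have : tuplesLE 0 m = {Fin.elim0} := by
      ext c
      simp only [mem_tuplesLE, mem_singleton, univ_eq_empty, sum_empty, zero_le, true_iff]
      exact Subsingleton.elim _ _
    simp [this]
  | succ s ih =>
    have hF' : ∀ b S p, p ∈ S → p + 1 ∈ S → F (insert b S) = 0 := fun b S p h h' =>
      hF _ p (mem_insert_of_mem h) (mem_insert_of_mem h')
    have hEq : ∀ m, ∑ c ∈ tuplesEq (s + 1) m, F (pairBase (l + 1) (s + 1) c)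
        = ∑ S ∈ powersetCard s (Ico (l + 1) (l + 2 * s + m)),
            F (insert (l + 1 + 2 * s + m) S) := by
      intro m
      rw [← ih m (fun S => F (insert (l + 1 + 2 * s + m) S)) (hF' _),
        ← sum_tuplesEq_succ s m
          (fun c => F (insert (l + 1 + 2 * s + m) (pairBase (l + 1) s c)))]
      refine sum_congr rfl fun c hc => ?_
      rw [pairBase, mem_tuplesEq.1 hc]
    induction m with
    | zero =>
      have h0 : tuplesLE (s + 1) 0 = tuplesEq (s + 1) 0 := by
        ext c; simp only [mem_tuplesLE, mem_tuplesEq]; omega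
      rw [h0, hEq, show l + 2 * (s + 1) + 0 = (l + 1 + 2 * s) + 1 by ring,
        sum_powersetCard_Ico_succ hF _ _ _ (by omega)]
      rw [sum_eq_zero (s := powersetCard (s + 1) _), zero_add]
      · congr 3; omega
      · intro S hS
        rw [mem_powersetCard] at hS
        obtain ⟨p, hp, hp'⟩ := exists_adjacent_of_card hS.1 hS.2
        exact hF S p hp hp'
    | succ m ihm =>
      rw [sum_tuplesLE_succ, ihm, hEq,
        show l + 2 * (s + 1) + (m + 1) = (l + 1 + 2 * s + (m + 1)) + 1 by ring,
        sum_powersetCard_Ico_succ hF _ _ _ (by omega)]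
      congr 3 <;> congr 1 <;> omega

/-- The cosine `cos (2πp/N)`. -/
noncomputable def cosPt (N p : ℕ) : ℝ := Real.cos (2 * Real.pi * p / N)

lemma cosPt_lt {N x y : ℕ} (hxy : y < x) (hx : 2 * x ≤ N) : cosPt N x < cosPt N y := by
  have hN : (0 : ℝ) < N := by exact_mod_cast (by omega : 0 < N)
  have hx' : 2 * (x : ℝ) ≤ N := by exact_mod_cast hx
  have hxy' : (y : ℝ) < x := by exact_mod_cast hxy
  refine Real.cos_lt_cos_of_nonneg_of_le_pi (by positivity) ?_ ?_
  · rw [div_le_iff₀ hN]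
    nlinarith [Real.pi_pos]
  · gcongr

lemma cosPt_reflect {N p q : ℕ} (hN : 0 < N) (h : p + q = N) : cosPt N p = cosPt N q := by
  have hN' : (N : ℝ) ≠ 0 := by positivity
  have : 2 * Real.pi * (p : ℝ) / N = 2 * Real.pi - 2 * Real.pi * q / N := by
    have : (p : ℝ) = N - q := by rw [← h]; push_cast; ring
    rw [this]; field_simp
  rw [cosPt, cosPt, this, Real.cos_two_pi_sub]

/-- The Vandermonde product of the cosines attached to a set of coordinates. -/
noncomputable def vand (N : ℕ) (S : Finset ℕ) : ℝ :=
  pairProd (fun x y => cosPt N y - cosPt N x) S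

lemma vand_insert {N : ℕ} {S : Finset ℕ} {x : ℕ} (h : ∀ y ∈ S, y < x) :
    vand N (insert x S) = vand N S * ∏ y ∈ S, (cosPt N y - cosPt N x) :=
  pairProd_insert_of_forall_lt _ h

lemma vand_pos {N : ℕ} {S : Finset ℕ} (h : ∀ x ∈ S, 2 * x ≤ N) : 0 < vand N S :=
  prod_pos fun x hx => prod_pos fun _ hy => sub_pos.2 (cosPt_lt (mem_filter.1 hy).2 (h x hx))

/-- The interaction of the pairs `x, x + 1` and `y, y + 1` in a Vandermonde product. -/
noncomputable def pairInter (N x y : ℕ) : ℝ :=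
  (cosPt N y - cosPt N x) * (cosPt N y - cosPt N (x + 1)) *
    ((cosPt N (y + 1) - cosPt N x) * (cosPt N (y + 1) - cosPt N (x + 1)))

/-- The contribution of a single pair `p, p + 1` to a Vandermonde product twisted by `H`. -/
noncomputable def pairSelf (N lo : ℕ) (H : ℝ → ℝ) (p : ℕ) : ℝ :=
  (cosPt N p - cosPt N (p + 1))
    * (∏ y ∈ range lo, (cosPt N y - cosPt N p) * (cosPt N y - cosPt N (p + 1)))
    * (H (cosPt N p) * H (cosPt N (p + 1)))

/-- The contribution of a set of pairs to a Vandermonde product twisted by `H`. -/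
noncomputable def pairWeight (N lo : ℕ) (H : ℝ → ℝ) (S : Finset ℕ) : ℝ :=
  pairProd (pairInter N) S * ∏ p ∈ S, pairSelf N lo H p

lemma pairInter_comm (N x y : ℕ) : pairInter N x y = pairInter N y x := by
  unfold pairInter; ring

lemma pairWeight_insert (N lo : ℕ) (H : ℝ → ℝ) {S : Finset ℕ} {x : ℕ} (hx : x ∉ S) :
    pairWeight N lo H (insert x S)
      = pairWeight N lo H S * (pairSelf N lo H x * ∏ y ∈ S, pairInter N x y) := by
  unfold pairWeight
  rw [pairProd_insert_of_symm (pairInter_comm N) hx, prod_insert hx]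
  ring

lemma pairWeight_eq_zero_of_adjacent (N lo : ℕ) (H : ℝ → ℝ) (S : Finset ℕ) (p : ℕ) (hp : p ∈ S)
    (hp' : p + 1 ∈ S) : pairWeight N lo H S = 0 := by
  unfold pairWeight pairProd
  rw [prod_eq_zero hp' (prod_eq_zero (mem_filter.2 ⟨hp, p.lt_succ_self⟩) (by simp [pairInter])),
    zero_mul]

lemma pairWeight_eq_zero_of_twist {N lo : ℕ} {H : ℝ → ℝ} {S : Finset ℕ} {p : ℕ} (hp : p ∈ S)
    (hH : H (cosPt N (p + 1)) = 0) : pairWeight N lo H S = 0 := by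
  unfold pairWeight
  rw [prod_eq_zero hp (by simp [pairSelf, hH]), mul_zero]

lemma pairWeight_reflect {N : ℕ} (lo : ℕ) (H : ℝ → ℝ) (S : Finset ℕ) (q q' : ℕ)
    (h : q + q' + 1 = N) (hq : q ∉ S) (hq' : q' ∉ S) :
    pairWeight N lo H (insert q' S) = -pairWeight N lo H (insert q S) := by
  have h1 : cosPt N (q' + 1) = cosPt N q := cosPt_reflect (by omega) (by omega)
  have h2 : cosPt N q' = cosPt N (q + 1) := cosPt_reflect (by omega) (by omega)
  have hself : pairSelf N lo H q' = -pairSelf N lo H q := by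
    simp only [pairSelf, h1, h2, mul_comm (cosPt N _ - cosPt N (q + 1)) (cosPt N _ - cosPt N q)]
    ring
  have hinter : ∀ y, pairInter N q' y = pairInter N q y := fun y => by
    simp only [pairInter, h1, h2]; ring
  rw [pairWeight_insert _ _ _ hq, pairWeight_insert _ _ _ hq', hself]
  simp only [hinter]
  ring

lemma pairWeight_eq_zero_of_reflect {N : ℕ} (lo : ℕ) (H : ℝ → ℝ) (S : Finset ℕ) (q q' : ℕ)
    (h : q + q' + 1 = N) (hne : q ≠ q') (hq : q ∉ S) :
    pairWeight N lo H (insert q (insert q' S)) = 0 := by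
  have h2 : cosPt N q' = cosPt N (q + 1) := cosPt_reflect (by omega) (by omega)
  rw [pairWeight_insert _ _ _ (by simp [hne, hq]),
    prod_eq_zero (mem_insert_self q' S) (by simp [pairInter, h2]), mul_zero, mul_zero]

lemma sum_pairWeight_reflect {N lo M M' : ℕ} (H : ℝ → ℝ) (hN : M + M' = N) (hM : M ≤ M')
    (hlo : lo ≤ M) (s : ℕ) :
    ∑ S ∈ powersetCard s (Ico lo M'), pairWeight N lo H S
      = ∑ S ∈ powersetCard s (Ico lo M), pairWeight N lo H S := by
  have := sum_powersetCard_union_Ico (N := N) (F := pairWeight N lo H)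
    (pairWeight_reflect lo H) (fun S q q' h hne hq _ =>
      pairWeight_eq_zero_of_reflect lo H S q q' h hne hq)
    (M' - M) M (Ico lo M) (by omega) (Ico_disjoint_Ico_consecutive _ _ _) s
  rw [← this, Nat.add_sub_cancel' hM, Ico_union_Ico_eq_Ico hlo hM]

lemma prod_pairSet (lo s : ℕ) (c : Fin s → ℕ) (f : ℕ → ℝ) :
    ∏ y ∈ pairSet lo s c, f y
      = (∏ y ∈ range lo, f y) * ∏ p ∈ pairBase lo s c, f p * f (p + 1) := by
  induction s with
  | zero => simp [pairSet, pairBase]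
  | succ s ih =>
    have hle := sum_tail_le c
    rw [pairSet, pairBase, prod_insert, prod_insert, prod_insert, ih]
    · ring
    · intro h
      have := lt_of_mem_pairBase h
      omega
    · intro h
      have := lt_of_mem_pairSet h
      omega
    · rw [mem_insert, not_or]
      refine ⟨by omega, fun h => ?_⟩
      have := lt_of_mem_pairSet h
      omega

lemma vand_pairSet (N lo s : ℕ) (c : Fin s → ℕ) (H : ℝ → ℝ) :
    vand N (pairSet lo s c) * ∏ y ∈ pairSet lo s c, H (cosPt N y)
      = vand N (range lo) * (∏ y ∈ range lo, H (cosPt N y))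
        * pairWeight N lo H (pairBase lo s c) := by
  induction s with
  | zero => simp [pairSet, pairBase, pairWeight, pairProd]
  | succ s ih =>
    have hle := sum_tail_le c
    have hbase : lo + 2 * s + ∑ i, c i ∉ pairBase lo s (Fin.tail c) := by
      intro h
      have := lt_of_mem_pairBase h
      omega
    have hset : ∀ y ∈ pairSet lo s (Fin.tail c), y < lo + 2 * s + ∑ i, c i := by
      intro y h
      have := lt_of_mem_pairSet h
      omega
    rw [pairSet, pairBase, pairWeight_insert _ _ _ hbase]
    generalize lo + 2 * s + ∑ i, c i = t at *
    have hset' : ∀ y ∈ insert t (pairSet lo s (Fin.tail c)), y < t + 1 := by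
      intro y h
      rcases mem_insert.1 h with rfl | h
      · omega
      · have := hset y h
        omega
    have ht : t ∉ pairSet lo s (Fin.tail c) := fun h => (hset t h).false
    have ht' : t + 1 ∉ insert t (pairSet lo s (Fin.tail c)) := fun h => (hset' _ h).false
    have hinter : ∀ p, pairInter N t p
        = (cosPt N p - cosPt N t) * (cosPt N (p + 1) - cosPt N t)
          * ((cosPt N p - cosPt N (t + 1)) * (cosPt N (p + 1) - cosPt N (t + 1))) := fun p => by
      unfold pairInter; ring
    rw [vand_insert hset', vand_insert hset, prod_insert ht', prod_insert ht, prod_insert ht,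
      prod_pairSet lo s _ (fun y => cosPt N y - cosPt N t),
      prod_pairSet lo s _ (fun y => cosPt N y - cosPt N (t + 1)),
      ← mul_assoc (vand N (range lo) * _), ← ih]
    simp only [pairSelf, hinter, prod_mul_distrib]
    ring

/-- The sum of Vandermonde products underlying `z^{(a)}_m` for even `a` below the spin nodes. -/
noncomputable def evenSum (N lo s m : ℕ) : ℝ := ∑ c ∈ tuplesLE s m, vand N (pairSet lo s c)

/-- The sum of Vandermonde products underlying `z^{(a)}_m` for odd `a` below the spin nodes. -/
noncomputable def oddSum (N lo s m : ℕ) : ℝ :=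
  ∑ c ∈ tuplesLE s m, vand N (insert (lo + 2 * s + m) (pairSet lo s c))

lemma evenSum_eq (N l s m : ℕ) :
    evenSum N (l + 1) s m = vand N (range (l + 1))
      * ∑ S ∈ powersetCard s (Ico (l + 1) (l + 2 * s + m)), pairWeight N (l + 1) (fun _ => 1) S := by
  rw [← sum_tuplesLE_pairBase l s m _ (pairWeight_eq_zero_of_adjacent N _ _), mul_sum]
  refine sum_congr rfl fun c _ => ?_
  have := vand_pairSet N (l + 1) s c (fun _ => 1)
  simpa using this

lemma evenSum_symm {N l s m m' : ℕ} (hN : 2 * (l + 2 * s) + (m + m') = N) (hm : m ≤ m')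
    (hs : 0 < s) : evenSum N (l + 1) s m = evenSum N (l + 1) s m' := by
  rw [evenSum_eq, evenSum_eq, sum_pairWeight_reflect (M := l + 2 * s + m)
    (M' := l + 2 * s + m') _ (by omega) (by omega)
    (by omega)]

lemma vand_insert_pairSet {N lo s m : ℕ} {c : Fin s → ℕ} (hc : c ∈ tuplesLE s m) :
    vand N (insert (lo + 2 * s + m) (pairSet lo s c)) = vand N (pairSet lo s c)
      * ∏ y ∈ pairSet lo s c, (cosPt N y - cosPt N (lo + 2 * s + m)) := by
  refine vand_insert fun y hy => ?_
  have := lt_of_mem_pairSet hy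
  have := mem_tuplesLE.1 hc
  omega

lemma oddSum_eq (N l s m : ℕ) :
    oddSum N (l + 1) s m = vand N (range (l + 1))
      * (∏ y ∈ range (l + 1), (cosPt N y - cosPt N (l + 1 + 2 * s + m)))
      * ∑ S ∈ powersetCard s (Ico (l + 1) (l + 1 + 2 * s + m)),
          pairWeight N (l + 1) (fun t => t - cosPt N (l + 1 + 2 * s + m)) S := by
  have hsub : powersetCard s (Ico (l + 1) (l + 2 * s + m))
      ⊆ powersetCard s (Ico (l + 1) (l + 1 + 2 * s + m)) :=
    powersetCard_mono (Ico_subset_Ico_right (by omega))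
  rw [← sum_subset hsub,
    ← sum_tuplesLE_pairBase l s m _ (pairWeight_eq_zero_of_adjacent N _ _), mul_sum]
  · refine sum_congr rfl fun c hc => ?_
    rw [vand_insert_pairSet hc]
    exact vand_pairSet N (l + 1) s c (fun t => t - cosPt N (l + 1 + 2 * s + m))
  · intro S hS hS'
    rw [mem_powersetCard] at hS hS'
    have : l + 2 * s + m ∈ S := by
      by_contra hcon
      refine hS' ⟨fun x hx => ?_, hS.2⟩
      have h1 := mem_Ico.1 (hS.1 hx)
      have h2 : x ≠ l + 2 * s + m := by
        rintro rfl
        exact hcon hx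
      exact mem_Ico.2 ⟨h1.1, by omega⟩
    refine pairWeight_eq_zero_of_twist this ?_
    rw [show l + 2 * s + m + 1 = l + 1 + 2 * s + m by ring, sub_self]

lemma oddSum_symm {N l s m m' : ℕ} (hN : 2 * (l + 1 + 2 * s) + (m + m') = N) (hm : m ≤ m') :
    oddSum N (l + 1) s m = oddSum N (l + 1) s m' := by
  have hX : cosPt N (l + 1 + 2 * s + m') = cosPt N (l + 1 + 2 * s + m) :=
    cosPt_reflect (by omega) (by omega)
  rw [oddSum_eq, oddSum_eq, hX,
    sum_pairWeight_reflect (M := l + 1 + 2 * s + m)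
      (M' := l + 1 + 2 * s + m') _ (by omega) (by omega) (by omega)]

lemma tuplesLE_zero (s : ℕ) : tuplesLE s 0 = {0} := by
  ext c
  simp [mem_tuplesLE, funext_iff]

lemma zero_mem_tuplesLE (s m : ℕ) : (0 : Fin s → ℕ) ∈ tuplesLE s m := by
  simp [mem_tuplesLE]

lemma evenSum_zero (N lo s : ℕ) : evenSum N lo s 0 = vand N (range (lo + 2 * s)) := by
  rw [evenSum, tuplesLE_zero, sum_singleton, pairSet_zero]

lemma oddSum_zero (N lo s : ℕ) : oddSum N lo s 0 = vand N (range (lo + 2 * s + 1)) := by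
  rw [oddSum, tuplesLE_zero, sum_singleton, pairSet_zero, add_zero, range_add_one]

lemma vand_pairSet_pos {N lo s m : ℕ} (h : 2 * (lo + 2 * s + m) ≤ N + 2) {c : Fin s → ℕ}
    (hc : c ∈ tuplesLE s m) : 0 < vand N (pairSet lo s c) := by
  refine vand_pos fun x hx => ?_
  have := lt_of_mem_pairSet hx
  have := mem_tuplesLE.1 hc
  omega

lemma vand_insert_pairSet_pos {N lo s m : ℕ} (h : 2 * (lo + 2 * s + m) ≤ N) {c : Fin s → ℕ}
    (hc : c ∈ tuplesLE s m) : 0 < vand N (insert (lo + 2 * s + m) (pairSet lo s c)) := by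
  refine vand_pos fun x hx => ?_
  rcases mem_insert.1 hx with rfl | hx
  · exact h
  have := lt_of_mem_pairSet hx
  have := mem_tuplesLE.1 hc
  omega

lemma evenSum_pos {N lo s m : ℕ} (h : 2 * (lo + 2 * s + m) ≤ N + 2) : 0 < evenSum N lo s m :=
  sum_pos (fun _ hc => vand_pairSet_pos h hc) ⟨0, zero_mem_tuplesLE s m⟩

lemma oddSum_pos {N lo s m : ℕ} (h : 2 * (lo + 2 * s + m) ≤ N) : 0 < oddSum N lo s m :=
  sum_pos (fun _ hc => vand_insert_pairSet_pos h hc) ⟨0, zero_mem_tuplesLE s m⟩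

lemma evenSum_lt {N lo s m : ℕ} (hs : 0 < s) (h : 2 * (lo + 2 * s + (m + 1)) ≤ N + 2) :
    evenSum N lo s m < evenSum N lo s (m + 1) := by
  rw [evenSum, evenSum, sum_tuplesLE_succ]
  refine lt_add_of_pos_right _ (sum_pos (fun c hc => ?_)
    ⟨Pi.single ⟨0, hs⟩ (m + 1), by rw [mem_tuplesEq]; simp⟩)
  exact vand_pairSet_pos h (mem_tuplesLE.2 (mem_tuplesEq.1 hc).le)

lemma oddSum_lt {N lo s m : ℕ} (hlo : 0 < lo) (h : 2 * (lo + 2 * s + (m + 1)) ≤ N) :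
    oddSum N lo s m < oddSum N lo s (m + 1) := by
  have hsub := tuplesLE_mono s m.le_succ
  calc oddSum N lo s m
      < ∑ c ∈ tuplesLE s m, vand N (insert (lo + 2 * s + (m + 1)) (pairSet lo s c)) := by
        refine sum_lt_sum_of_nonempty ⟨0, zero_mem_tuplesLE s m⟩ fun c hc => ?_
        rw [vand_insert_pairSet hc, vand_insert_pairSet (hsub hc)]
        refine mul_lt_mul_of_pos_left ?_ (vand_pairSet_pos (m := m) (by omega) hc)
        refine prod_lt_prod_of_nonempty (fun y hy => ?_) (fun y hy => ?_)
          ⟨0, range_subset_pairSet lo s c (mem_range.2 hlo)⟩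
        · have := lt_of_mem_pairSet hy
          have := mem_tuplesLE.1 hc
          exact sub_pos.2 (cosPt_lt (by omega) (by omega))
        · exact sub_lt_sub_left (cosPt_lt (by omega) (by omega)) _
    _ ≤ oddSum N lo s (m + 1) :=
        sum_le_sum_of_subset_of_nonneg hsub fun c hc _ => (vand_insert_pairSet_pos h hc).le

lemma sin_mul_sin_eq (x y n : ℝ) :
    Real.sin (Real.pi * (x - y) / n) * Real.sin (Real.pi * (x + y) / n)
      = (Real.cos (2 * Real.pi * y / n) - Real.cos (2 * Real.pi * x / n)) / 2 := by
  have hx : 2 * Real.pi * x / n = Real.pi * (x + y) / n + Real.pi * (x - y) / n := by ring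
  have hy : 2 * Real.pi * y / n = Real.pi * (x + y) / n - Real.pi * (x - y) / n := by ring
  rw [hx, hy, Real.cos_add, Real.cos_sub]
  ring

lemma qdimD_eq_vand {r k : ℕ} (hr : 1 ≤ r) {lam : ℕ → ℤ} {u : ℕ → ℕ}
    (hu : StrictAntiOn u (Icc 1 r : Finset ℕ)) (hlam : ∀ i ∈ Icc 1 r, uCoord r lam i = u i) :
    qdimD r k lam
      = vand (2 * (r - 1) + k) ((Icc 1 r).image u) / vand (2 * (r - 1) + k) (range r) := by
  have hN : ((2 * (r - 1) + k : ℕ) : ℝ) = 2 * (r : ℝ) - 2 + k := by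
    push_cast [Nat.cast_sub hr]; ring
  have hv : StrictAntiOn (fun i => r - i) (Icc 1 r : Finset ℕ) := by
    intro i hi j hj hij
    have := mem_Icc.1 hi
    have := mem_Icc.1 hj
    simp only
    omega
  have hrange : range r = (Icc 1 r).image (fun i => r - i) := by
    ext x
    simp only [mem_range, mem_image, mem_Icc]
    exact ⟨fun h => ⟨r - x, by omega, by omega⟩, fun ⟨i, hi, h⟩ => by omega⟩
  rw [hrange, vand, vand, pairProd_image _ hu, pairProd_image _ hv, ← prod_div_distrib, qdimD]
  refine prod_congr rfl fun p hp => ?_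
  simp only [mem_filter, mem_product] at hp
  obtain ⟨⟨h1, h2⟩, -⟩ := hp
  have e1 : ((r - p.1 : ℕ) : ℝ) = r - p.1 := Nat.cast_sub (mem_Icc.1 h1).2
  have e2 : ((r - p.2 : ℕ) : ℝ) = r - p.2 := Nat.cast_sub (mem_Icc.1 h2).2
  have a1 : (p.2 : ℝ) - p.1 = (r - p.1) - (r - p.2) := by ring
  have a2 : 2 * (r : ℝ) - p.1 - p.2 = (r - p.1) + (r - p.2) := by ring
  rw [hlam _ h1, hlam _ h2, a1, a2, sin_mul_sin_eq, sin_mul_sin_eq,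
    div_div_div_cancel_right₀ two_ne_zero]
  simp only [cosPt, hN, e1, e2]

/-- The coordinates of `λ + ρ` for `λ` with multiplicity `c t` at the node `e t`. -/
def nodeCoord {s : ℕ} (r : ℕ) (e c : Fin s → ℕ) (i : ℕ) : ℕ :=
  (∑ t, if i ≤ e t then c t else 0) + (r - i)

lemma nodeCoord_strictAntiOn {s : ℕ} (r : ℕ) (e c : Fin s → ℕ) :
    StrictAntiOn (nodeCoord r e c) (Icc 1 r : Finset ℕ) := by
  intro i hi j hj hij
  have := mem_Icc.1 hi
  have := mem_Icc.1 hj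
  have hsum : (∑ t, if j ≤ e t then c t else 0) ≤ ∑ t, if i ≤ e t then c t else 0 := by
    refine sum_le_sum fun t _ => ?_
    split_ifs <;> omega
  unfold nodeCoord
  omega

lemma qdimD_eq_vand_nodeCoord {r k s : ℕ} (hr : 2 ≤ r) {e : Fin s → ℕ} (c : Fin s → ℕ)
    (he : ∀ t, e t ≤ r - 2) :
    qdimD r k (fun j => ∑ t, if j = e t then (c t : ℤ) else 0)
      = vand (2 * (r - 1) + k) ((Icc 1 r).image (nodeCoord r e c))
        / vand (2 * (r - 1) + k) (range r) := by
  refine qdimD_eq_vand (by omega) (nodeCoord_strictAntiOn r e c) fun i hi => ?_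
  have hi' := mem_Icc.1 hi
  have hzero : ∀ j, r - 2 < j → (∑ t, if j = e t then (c t : ℤ) else 0) = 0 := fun j hj =>
    sum_eq_zero fun t _ => if_neg (by have := he t; omega)
  have hsum : ∑ j ∈ Icc i (r - 2), ((∑ t, if j = e t then (c t : ℤ) else 0 : ℤ) : ℝ)
      = ((∑ t, if i ≤ e t then c t else 0 : ℕ) : ℝ) := by
    push_cast
    rw [sum_comm]
    refine sum_congr rfl fun t _ => ?_
    rw [sum_ite_eq']
    simp [mem_Icc, he t]
  unfold uCoord
  beta_reduce
  rw [hsum, hzero r (by omega), hzero (r - 1) (by omega)]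
  unfold nodeCoord
  rw [Nat.cast_add, Nat.cast_sub hi'.2]
  split_ifs with h
  · subst h
    rw [sum_eq_zero fun t _ => if_neg (by have := he t; omega)]
    simp
  · simp

lemma Icc_one_succ_eq (r : ℕ) : Icc 1 (r + 1) = insert 1 ((Icc 1 r).image (· + 1)) := by
  ext x
  simp only [mem_insert, mem_image, mem_Icc]
  refine ⟨fun h => ?_, ?_⟩
  · rcases Nat.eq_or_lt_of_le h.1 with h1 | h1
    · exact Or.inl h1.symm
    · exact Or.inr ⟨x - 1, by omega, by omega⟩
  · rintro (rfl | ⟨y, hy, rfl⟩) <;> omega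

lemma image_nodeCoord_succ {s : ℕ} (r : ℕ) (e c : Fin s → ℕ) (he : ∀ t, 1 ≤ e t) :
    (Icc 1 (r + 1)).image (nodeCoord (r + 1) e c)
      = insert (∑ t, c t + r) ((Icc 1 r).image (nodeCoord r (fun t => e t - 1) c)) := by
  rw [Icc_one_succ_eq, image_insert, image_image]
  congr 1
  · simp [nodeCoord, he]
  · refine image_congr fun i _ => ?_
    simp only [Function.comp, nodeCoord]
    congr 1
    · refine sum_congr rfl fun t _ => ?_
      have := he t
      congr 1
      exact propext (by omega)
    · omega

lemma image_nodeCoord_tail {s : ℕ} (r : ℕ) (e c : Fin (s + 1) → ℕ) (he : e 0 = 0) :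
    (Icc 1 r).image (nodeCoord r e c)
      = (Icc 1 r).image (nodeCoord r (Fin.tail e) (Fin.tail c)) := by
  refine image_congr fun i hi => ?_
  have := (mem_Icc.1 hi).1
  simp only [nodeCoord]
  rw [Fin.sum_univ_succ, if_neg (by omega), zero_add]
  rfl

lemma image_nodeCoord_even (lo s : ℕ) (c : Fin s → ℕ) :
    (Icc 1 (lo + 2 * s)).image (nodeCoord (lo + 2 * s) (fun t => 2 * (t : ℕ) + 2) c)
      = pairSet lo s c := by
  induction s with
  | zero =>
    ext x
    simp only [nodeCoord, pairSet, mem_image, mem_Icc, mem_range, univ_eq_empty, sum_empty]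
    exact ⟨fun ⟨i, hi, h⟩ => by omega, fun h => ⟨lo - x, by omega, by omega⟩⟩
  | succ s ih =>
    rw [show lo + 2 * (s + 1) = lo + 2 * s + 1 + 1 by ring,
      image_nodeCoord_succ _ _ _ (fun t => by omega),
      image_nodeCoord_succ _ _ _ (fun t => by omega),
      image_nodeCoord_tail _ _ _ (by simp), pairSet, ← ih]
    congr 1
    · ring
    · congr 1
      · ring

lemma image_nodeCoord_odd (lo s : ℕ) (c : Fin (s + 1) → ℕ) :
    (Icc 1 (lo + 2 * s + 1)).image (nodeCoord (lo + 2 * s + 1) (fun t => 2 * (t : ℕ) + 1) c)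
      = insert (lo + 2 * s + ∑ t, c t) (pairSet lo s (Fin.tail c)) := by
  rw [image_nodeCoord_succ _ _ _ (fun t => by omega), image_nodeCoord_tail _ _ _ (by simp),
    ← image_nodeCoord_even]
  congr 1
  · ring

lemma zD_even {r k s m : ℕ} (hs : 2 * s + 2 ≤ r) :
    zD r k (2 * s) m
      = evenSum (2 * (r - 1) + k) (r - 2 * s) s m / vand (2 * (r - 1) + k) (range r) := by
  obtain ⟨lo, rfl⟩ := Nat.exists_eq_add_of_le' (show 2 * s ≤ r by omega)
  have hs' : 2 * s / 2 = s := by omega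
  rw [zD, if_neg (by omega), if_neg (by omega), hs', Nat.add_sub_cancel, evenSum, sum_div]
  refine sum_congr rfl fun c _ => ?_
  rw [qdimD_eq_vand_nodeCoord (e := fun t : Fin s => 2 * (t : ℕ) + 2) (by omega) c
    (fun t => by have := t.2; omega), image_nodeCoord_even]

lemma zD_odd {r k s m : ℕ} (hs : 2 * s + 3 ≤ r) :
    zD r k (2 * s + 1) m
      = oddSum (2 * (r - 1) + k) (r - 1 - 2 * s) s m / vand (2 * (r - 1) + k) (range r) := by
  obtain ⟨lo, rfl⟩ := Nat.exists_eq_add_of_le' (show 2 * s + 1 ≤ r by omega)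
  have hs' : (2 * s + 1 + 1) / 2 = s + 1 := by omega
  have hlo : lo + (2 * s + 1) - 1 - 2 * s = lo := by omega
  rw [zD, if_neg (by omega), if_pos (by omega), hs', hlo, oddSum, sum_div,
    ← sum_tuplesEq_succ s m (fun c => vand _ (insert (lo + 2 * s + m) (pairSet lo s c)) / _)]
  refine sum_congr rfl fun c hc => ?_
  rw [qdimD_eq_vand_nodeCoord (e := fun t : Fin (s + 1) => 2 * (t : ℕ) + 1) (by omega) c
    (fun t => by have := t.2; omega), ← add_assoc, image_nodeCoord_odd, mem_tuplesEq.1 hc]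

/-- The contribution of the positive root `e_i + e_j` to the quantum dimension of `m ω_r`. -/
noncomputable def spinFactor (r k m : ℕ) (p : ℕ × ℕ) : ℝ :=
  Real.sin (Real.pi * (m + (2 * (r : ℝ) - p.1 - p.2)) / (2 * (r : ℝ) - 2 + k))

/-- The pairs indexing the positive roots of `D_r`. -/
def rootPairs (r : ℕ) : Finset (ℕ × ℕ) := (Icc 1 r ×ˢ Icc 1 r).filter fun p => p.1 < p.2

lemma mem_rootPairs {r : ℕ} {p : ℕ × ℕ} :
    p ∈ rootPairs r ↔ 1 ≤ p.1 ∧ p.1 < p.2 ∧ p.2 ≤ r := by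
  simp only [rootPairs, mem_filter, mem_product, mem_Icc]
  omega

lemma prod_rootPairs_reverse (r : ℕ) (f : ℕ × ℕ → ℝ) :
    ∏ p ∈ rootPairs r, f (r + 1 - p.2, r + 1 - p.1) = ∏ p ∈ rootPairs r, f p := by
  refine prod_nbij' (fun p => (r + 1 - p.2, r + 1 - p.1)) (fun p => (r + 1 - p.2, r + 1 - p.1))
    ?_ ?_ ?_ ?_ ?_
  · intro p hp; rw [mem_rootPairs] at *; simp only; omega
  · intro p hp; rw [mem_rootPairs] at *; simp only; omega
  · intro p hp; rw [mem_rootPairs] at hp; ext <;> simp only <;> omega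
  · intro p hp; rw [mem_rootPairs] at hp; ext <;> simp only <;> omega
  · intro p _; rfl

lemma spinFactor_reverse {r k m : ℕ} {p : ℕ × ℕ} (hp : p ∈ rootPairs r) :
    spinFactor r k m (r + 1 - p.2, r + 1 - p.1)
      = Real.sin (Real.pi * (m + ((p.1 : ℝ) + p.2 - 2)) / (2 * (r : ℝ) - 2 + k)) := by
  rw [mem_rootPairs] at hp
  rw [spinFactor]
  push_cast [Nat.cast_sub (show p.1 ≤ r + 1 by omega), Nat.cast_sub (show p.2 ≤ r + 1 by omega)]
  congr 3
  ring

lemma spinFactor_pos {r k m : ℕ} (hm : m ≤ k) {p : ℕ × ℕ} (hp : p ∈ rootPairs r) :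
    0 < spinFactor r k m p := by
  rw [mem_rootPairs] at hp
  have h1 : (p.1 : ℝ) + p.2 + 1 ≤ 2 * r := by exact_mod_cast (by omega : p.1 + p.2 + 1 ≤ 2 * r)
  have h2 : (3 : ℝ) ≤ p.1 + p.2 := by exact_mod_cast (by omega : 3 ≤ p.1 + p.2)
  have h3 : (m : ℝ) ≤ k := by exact_mod_cast hm
  have h4 : (0 : ℝ) ≤ m := m.cast_nonneg
  have hn : (0 : ℝ) < 2 * r - 2 + k := by linarith
  refine Real.sin_pos_of_pos_of_lt_pi ?_ ?_
  · exact div_pos (mul_pos Real.pi_pos (by linarith)) hn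
  · rw [div_lt_iff₀ hn]
    exact mul_lt_mul_of_pos_left (by linarith) Real.pi_pos

lemma qdimD_spin {r k m a : ℕ} (hr : 2 ≤ r) (ha : a = r - 1 ∨ a = r) :
    qdimD r k (fun j => if j = a then (m : ℤ) else 0)
      = ∏ p ∈ rootPairs r, spinFactor r k m p / spinFactor r k 0 p := by
  have hu : ∀ i, 1 ≤ i → i < r → uCoord r (fun j => if j = a then (m : ℤ) else 0) i
      = m / 2 + (r - i) := by
    intro i _ hi
    rw [uCoord, if_neg (by omega), sum_eq_zero]
    · rcases ha with rfl | rfl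
      · simp [show r ≠ r - 1 by omega]
      · simp [show a - 1 ≠ a by omega]
    · intro j hj
      rw [mem_Icc] at hj
      simp [show j ≠ a by omega]
  have hur : uCoord r (fun j => if j = a then (m : ℤ) else 0) r = m / 2 ∨
      uCoord r (fun j => if j = a then (m : ℤ) else 0) r = -(m / 2) := by
    rw [uCoord, if_pos rfl]
    rcases ha with rfl | rfl
    · right; simp [show r ≠ r - 1 by omega]; ring
    · left; simp [show a - 1 ≠ a by omega]
  rw [qdimD]
  refine prod_congr rfl fun p hp => ?_
  have hp' := mem_rootPairs.1 hp
  have hsin : Real.sin (Real.pi * ((p.2 : ℝ) - p.1) / (2 * (r : ℝ) - 2 + k)) ≠ 0 := by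
    have h1 : (p.1 : ℝ) + 1 ≤ p.2 := by exact_mod_cast hp'.2.1
    have h2 : (1 : ℝ) ≤ p.1 := by exact_mod_cast hp'.1
    have h3 : (p.2 : ℝ) ≤ r := by exact_mod_cast hp'.2.2
    have h4 : (0 : ℝ) ≤ k := k.cast_nonneg
    have hn : (0 : ℝ) < 2 * r - 2 + k := by linarith
    refine (Real.sin_pos_of_pos_of_lt_pi ?_ ?_).ne'
    · exact div_pos (mul_pos Real.pi_pos (by linarith)) hn
    · rw [div_lt_iff₀ hn]
      exact mul_lt_mul_of_pos_left (by linarith) Real.pi_pos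
  have hnum : Real.sin (Real.pi * (uCoord r (fun j => if j = a then (m : ℤ) else 0) p.1
          - uCoord r (fun j => if j = a then (m : ℤ) else 0) p.2) / (2 * (r : ℝ) - 2 + k))
        * Real.sin (Real.pi * (uCoord r (fun j => if j = a then (m : ℤ) else 0) p.1
          + uCoord r (fun j => if j = a then (m : ℤ) else 0) p.2) / (2 * (r : ℝ) - 2 + k))
      = Real.sin (Real.pi * ((p.2 : ℝ) - p.1) / (2 * (r : ℝ) - 2 + k)) * spinFactor r k m p := by
    rw [hu p.1 hp'.1 (by omega), spinFactor]
    rcases Nat.lt_or_ge p.2 r with h | h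
    · rw [hu p.2 (by omega) h]
      congr 3 <;> ring
    · have h' : p.2 = r := by omega
      rw [h']
      rcases hur with h | h <;> rw [h]
      · congr 3 <;> ring
      · rw [mul_comm]
        congr 3 <;> ring
  rw [hnum, mul_div_mul_left _ _ hsin]
  simp [spinFactor]

/-- The quantum dimension of a multiple of a spin weight. -/
noncomputable def spinDim (r k m : ℕ) : ℝ :=
  ∏ p ∈ rootPairs r, spinFactor r k m p / spinFactor r k 0 p

lemma spinDim_pos {r k m : ℕ} (hm : m ≤ k) : 0 < spinDim r k m :=
  prod_pos fun _ hp => div_pos (spinFactor_pos hm hp) (spinFactor_pos k.zero_le hp)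

lemma spinDim_zero (r k : ℕ) : spinDim r k 0 = 1 :=
  prod_eq_one fun _ hp => div_self (spinFactor_pos k.zero_le hp).ne'

lemma spinDim_symm {r k m m' : ℕ} (hr : 2 ≤ r) (hm : m + m' = k) :
    spinDim r k m = spinDim r k m' := by
  rw [spinDim, spinDim, prod_div_distrib, prod_div_distrib, ← prod_rootPairs_reverse]
  congr 1
  refine prod_congr rfl fun p hp => ?_
  have hr' : (2 : ℝ) ≤ r := by exact_mod_cast hr
  have hn : 2 * (r : ℝ) - 2 + k ≠ 0 := by
    have : (0 : ℝ) ≤ k := k.cast_nonneg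
    linarith
  rw [spinFactor_reverse hp, spinFactor, ← Real.sin_pi_sub]
  congr 1
  have : (k : ℝ) = m + m' := by exact_mod_cast hm.symm
  rw [this] at hn ⊢
  rw [eq_div_iff hn, sub_mul, div_mul_cancel₀ _ hn]
  ring

lemma spinDim_lt {r k m : ℕ} (hr : 2 ≤ r) (hm : 2 * (m + 1) ≤ k) :
    spinDim r k m < spinDim r k (m + 1) := by
  refine lt_of_pow_lt_pow_left₀ 2 (spinDim_pos (by omega)).le ?_
  have hsq : ∀ m, spinDim r k m ^ 2 = (∏ p ∈ rootPairs r,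
      spinFactor r k m p * spinFactor r k m (r + 1 - p.2, r + 1 - p.1))
        / (∏ p ∈ rootPairs r, spinFactor r k 0 p) ^ 2 := by
    intro m
    rw [spinDim, prod_div_distrib, div_pow, prod_mul_distrib, prod_rootPairs_reverse, sq]
  have hrev : ∀ p ∈ rootPairs r, (r + 1 - p.2, r + 1 - p.1) ∈ rootPairs r := by
    intro p hp; rw [mem_rootPairs] at *; simp only; omega
  have hdouble : ∀ m, ∀ p ∈ rootPairs r,
      spinFactor r k m p * spinFactor r k m (r + 1 - p.2, r + 1 - p.1)
        = (Real.cos (2 * Real.pi * ((r : ℝ) + 1 - p.1 - p.2) / (2 * (r : ℝ) - 2 + k))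
          - cosPt (2 * (r - 1) + k) (m + (r - 1))) / 2 := by
    intro m p hp
    have hN : ((2 * (r - 1) + k : ℕ) : ℝ) = 2 * (r : ℝ) - 2 + k := by
      push_cast [Nat.cast_sub (show 1 ≤ r by omega)]; ring
    rw [spinFactor_reverse hp, spinFactor, cosPt, hN]
    push_cast [Nat.cast_sub (show 1 ≤ r by omega)]
    rw [← sin_mul_sin_eq, mul_comm]
    congr 3 <;> ring
  rw [hsq, hsq]
  refine div_lt_div_of_pos_right ?_ (pow_pos (prod_pos fun p hp => spinFactor_pos k.zero_le hp) 2)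
  refine prod_lt_prod_of_nonempty (fun p hp => ?_) (fun p hp => ?_)
    ⟨(1, 2), mem_rootPairs.2 (by simp only; omega)⟩
  · exact mul_pos (spinFactor_pos (by omega) hp) (spinFactor_pos (by omega) (hrev p hp))
  · rw [hdouble _ p hp, hdouble _ p hp]
    have := cosPt_lt (N := 2 * (r - 1) + k) (x := m + 1 + (r - 1)) (y := m + (r - 1))
      (by omega) (by omega)
    linarith

/-- Symmetry together with positivity and growth on the first half gives all the properties of a
quantum dimension solution at a node. -/
lemma properties_of_half {k : ℕ} {z : ℕ → ℝ} (hpos : ∀ m, 2 * m ≤ k → 0 < z m)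
    (hsymm : ∀ m, 2 * m ≤ k → z m = z (k - m)) (hzero : z 0 = 1)
    (hlt : ∀ m, 2 * (m + 1) ≤ k → z m < z (m + 1)) :
    (∀ m ≤ k, 0 < z m) ∧ (∀ m : ℕ, 1 ≤ m → m ≤ k - 1 → z m = z (k - m)) ∧ z k = 1 ∧
      (∀ m : ℕ, 1 ≤ m → m ≤ k / 2 → z (m - 1) < z m) := by
  have hsymm' : ∀ m ≤ k, z m = z (k - m) := by
    intro m hm
    rcases le_total (2 * m) k with h | h
    · exact hsymm m h
    · rw [hsymm (k - m) (by omega), Nat.sub_sub_self hm]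
  refine ⟨fun m hm => ?_, fun m _ hm => hsymm' m (by omega), ?_, fun m hm hm' => ?_⟩
  · rcases le_total (2 * m) k with h | h
    · exact hpos m h
    · rw [hsymm' m hm]
      exact hpos _ (by omega)
  · rw [hsymm' k le_rfl, Nat.sub_self, hzero]
  · have := hlt (m - 1) (by omega)
    rwa [Nat.sub_add_cancel hm] at this

end QuantumDimD

open QuantumDimD in
/-- The KNS conjecture for `D_r`, first part: the quantum dimension solution satisfies
positivity, symmetry, the unit boundary condition, and unimodality. -/
theorem stmt12 (r k : ℕ) (hr : 4 ≤ r) (hk : 1 ≤ k)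
    (a : ℕ) (ha : a ∈ Finset.Icc 1 r) :
    (∀ m ≤ k, 0 < zD r k a m) ∧
    (∀ m : ℕ, 1 ≤ m → m ≤ k - 1 → zD r k a m = zD r k a (k - m)) ∧
    zD r k a k = 1 ∧
    (∀ m : ℕ, 1 ≤ m → m ≤ k / 2 → zD r k a (m - 1) < zD r k a m) := by
  rw [Finset.mem_Icc] at ha
  have hV : 0 < vand (2 * (r - 1) + k) (Finset.range r) := vand_pos fun x hx => by
    rw [Finset.mem_range] at hx
    omega
  by_cases hspin : a = r - 1 ∨ a = r
  · have hz : ∀ m, zD r k a m = spinDim r k m := fun m => by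
      rw [zD, if_pos hspin, qdimD_spin (by omega) hspin, spinDim]
    simp only [hz]
    exact properties_of_half (fun m hm => spinDim_pos (by omega))
      (fun m hm => spinDim_symm (by omega) (by omega)) (spinDim_zero r k)
      (fun m hm => spinDim_lt (by omega) hm)
  rcases Nat.even_or_odd' a with ⟨s, rfl | rfl⟩
  · obtain ⟨l, hl⟩ : ∃ l, r - 2 * s = l + 1 := ⟨r - 2 * s - 1, by omega⟩
    simp only [zD_even (show 2 * s + 2 ≤ r by omega), hl]
    refine properties_of_half (fun m hm => div_pos (evenSum_pos (by omega)) hV)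
      (fun m hm => ?_) ?_ (fun m hm => ?_)
    · rw [evenSum_symm (m' := k - m) (by omega) (by omega) (by omega)]
    · rw [evenSum_zero, show l + 1 + 2 * s = r by omega, div_self hV.ne']
    · exact div_lt_div_of_pos_right (evenSum_lt (by omega) (by omega)) hV
  · obtain ⟨l, hl⟩ : ∃ l, r - 1 - 2 * s = l + 1 := ⟨r - 1 - 2 * s - 1, by omega⟩
    simp only [zD_odd (show 2 * s + 3 ≤ r by omega), hl]
    refine properties_of_half (fun m hm => div_pos (oddSum_pos (by omega)) hV)
      (fun m hm => ?_) ?_ (fun m hm => ?_)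
    · rw [oddSum_symm (m' := k - m) (by omega) (by omega)]
    · rw [oddSum_zero, show l + 1 + 2 * s + 1 = r by omega, div_self hV.ne']
    · exact div_lt_div_of_pos_right (oddSum_lt (by omega) (by omega)) hV
end

section
/- For every a ∈ I = {1,…,r}, the quantum dimension solution of type D_r satisfies z^{(a)}_{k+1} = 0. -/
/-- The product of `c p q` over the pairs `p < q` of elements of `S`. -/
noncomputable def pairProd {ι : Type*} [LinearOrder ι] (c : ι → ι → ℝ) (S : Finset ι) : ℝ :=
  ∏ p ∈ S, ∏ q ∈ S, if p < q then c p q else 1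

theorem pairProd_insert {ι : Type*} [LinearOrder ι] {c : ι → ι → ℝ}
    (hcs : ∀ p q, c p q = c q p) {x : ι} {T : Finset ι} (hx : x ∉ T) :
    pairProd c (insert x T) = (∏ q ∈ T, c x q) * pairProd c T := by
  unfold pairProd
  rw [Finset.prod_insert hx, Finset.prod_insert hx]
  simp only [Finset.prod_insert hx, Finset.prod_mul_distrib, lt_irrefl, if_false, one_mul]
  rw [← mul_assoc, ← Finset.prod_mul_distrib]
  congr 1
  refine Finset.prod_congr rfl fun q hq => ?_
  have hne : x ≠ q := fun h => hx (h ▸ hq)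
  rcases lt_or_gt_of_ne hne with h | h
  · simp [h, h.not_gt]
  · simp [h, h.not_gt, hcs x q]

theorem pairProd_eq_zero {ι : Type*} [LinearOrder ι] {c : ι → ι → ℝ}
    {S : Finset ι} {p q : ι} (hp : p ∈ S) (hq : q ∈ S) (hpq : p < q) (h : c p q = 0) :
    pairProd c S = 0 :=
  Finset.prod_eq_zero hp (Finset.prod_eq_zero hq (by simp [hpq, h]))

theorem add_pairProd_insert_eq_zero {w : ℤ → ℝ} {c : ℤ → ℤ → ℝ} {N : ℤ}
    (hw : ∀ p, w (N - p) = -w p) (hcs : ∀ p q, c p q = c q p)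
    (hc : ∀ p q, c (N - p) q = c p q) {x : ℤ} {T : Finset ℤ} (hx : x ∉ T) (hx' : N - x ∉ T) :
    (∏ p ∈ insert x T, w p) * pairProd c (insert x T)
      + (∏ p ∈ insert (N - x) T, w p) * pairProd c (insert (N - x) T) = 0 := by
  rw [Finset.prod_insert hx, Finset.prod_insert hx', pairProd_insert hcs hx,
    pairProd_insert hcs hx', hw]
  simp only [hc]
  ring

theorem add_map_swap_pairProd_eq_zero {w : ℤ → ℝ} {c : ℤ → ℤ → ℝ} {N : ℤ}
    (hw : ∀ p, w (N - p) = -w p) (hcs : ∀ p q, c p q = c q p)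
    (hc : ∀ p q, c (N - p) q = c p q) (hc0 : ∀ p, c p p = 0) (x : ℤ) {S : Finset ℤ}
    (hS : x ∈ S ∨ N - x ∈ S) :
    (∏ p ∈ S, w p) * pairProd c S
      + (∏ p ∈ S.map (Equiv.swap x (N - x)).toEmbedding, w p)
        * pairProd c (S.map (Equiv.swap x (N - x)).toEmbedding) = 0 := by
  have key : ∀ y, y ∈ S → N - y ∉ S →
      (∏ p ∈ S, w p) * pairProd c S
        + (∏ p ∈ S.map (Equiv.swap y (N - y)).toEmbedding, w p)
          * pairProd c (S.map (Equiv.swap y (N - y)).toEmbedding) = 0 := by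
    intro y hy hy'
    have hmap : S.map (Equiv.swap y (N - y)).toEmbedding = insert (N - y) (S.erase y) := by
      ext p
      rw [Finset.mem_map_equiv, Equiv.symm_swap, Equiv.swap_apply_def]
      simp only [Finset.mem_insert, Finset.mem_erase]
      split_ifs <;> grind
    have h := add_pairProd_insert_eq_zero hw hcs hc (x := y) (T := S.erase y) (by simp)
      (fun h => hy' (Finset.mem_of_mem_erase h))
    rwa [Finset.insert_erase hy, ← hmap] at h
  by_cases h1 : x ∈ S
  · by_cases h2 : N - x ∈ S
    · have hmap : S.map (Equiv.swap x (N - x)).toEmbedding = S := by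
        ext p
        rw [Finset.mem_map_equiv, Equiv.symm_swap, Equiv.swap_apply_def]
        split_ifs <;> grind
      have hzero : (∏ p ∈ S, w p) * pairProd c S = 0 := by
        rcases lt_trichotomy x (N - x) with h | h | h
        · rw [pairProd_eq_zero h1 h2 h (by rw [hcs, hc, hc0]), mul_zero]
        · have hwx := hw x
          rw [← h] at hwx
          rw [Finset.prod_eq_zero h1 (by linarith), zero_mul]
        · rw [pairProd_eq_zero h2 h1 h (by rw [hc, hc0]), mul_zero]
      rw [hmap, hzero, add_zero]
    · exact key x h1 h2
  · have h2 := hS.resolve_left h1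
    have h := key (N - x) h2 (by simpa using h1)
    rwa [sub_sub_cancel, Equiv.swap_comm] at h

/-- Reflection `p ↦ N - p` cancels the terms of a sum over `b`-element sets as soon as the weight
`w` is odd and the pair interaction `c` is even under it and `c` forbids adjacent elements, provided
the elements of `U` outside the reflection-symmetric part do not have room for `b` elements. -/
theorem sum_powersetCard_pairProd_eq_zero {w : ℤ → ℝ} {c : ℤ → ℤ → ℝ} {N lo : ℤ} {b : ℕ}
    (hb : 0 < b) (hw : ∀ p, w (N - p) = -w p) (hcs : ∀ p q, c p q = c q p)
    (hc : ∀ p q, c (N - p) q = c p q) (hc0 : ∀ p, c p p = 0) (hc1 : ∀ p, c p (p + 1) = 0)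
    (U : Finset ℤ)
    (hU : ∀ p ∈ U, N - p ∉ U → w p ≠ 0 → lo ≤ p ∧ p < lo + 2 * ((b : ℤ) - 1)) :
    ∑ S ∈ U.powersetCard b, (∏ p ∈ S, w p) * pairProd c S = 0 := by
  induction U using Finset.strongInduction with
  | H U ih =>
    by_cases hx : ∃ x ∈ U, N - x ∈ U
    · obtain ⟨x, hxU, hxU'⟩ := hx
      set V := (U.erase x).erase (N - x) with hV
      have hVU : V ⊂ U :=
        (Finset.erase_subset _ _).trans_ssubset (Finset.erase_ssubset hxU)
      have hVsum := ih V hVU (by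
        intro p hp hp' hwp
        simp only [hV, Finset.mem_erase] at hp hp'
        refine hU p hp.2.2 (fun h => hp' ⟨?_, ?_, h⟩) hwp
        · intro h'
          exact hp.2.1 (by linarith)
        · intro h'
          exact hp.1 (by linarith))
      rw [← Finset.sum_sdiff (Finset.powersetCard_mono hVU.subset), hVsum, add_zero]
      have hmeet : ∀ S ∈ U.powersetCard b \ V.powersetCard b, x ∈ S ∨ N - x ∈ S := by
        intro S hS
        by_contra! h
        simp only [Finset.mem_sdiff, Finset.mem_powersetCard, not_and'] at hS
        refine hS.2 hS.1.2 fun p hp => ?_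
        simp only [hV, Finset.mem_erase]
        exact ⟨fun e => h.2 (e ▸ hp), fun e => h.1 (e ▸ hp), hS.1.1 hp⟩
      have hcancel := fun S hS =>
        add_map_swap_pairProd_eq_zero hw hcs hc hc0 x (S := S) (hmeet S hS)
      refine Finset.sum_involution
        (fun S _ => S.map (Equiv.swap x (N - x)).toEmbedding) hcancel ?_ ?_ ?_
      · intro S hS hne heq
        have := hcancel S hS
        rw [heq] at this
        exact hne (by linarith)
      · intro S hS
        have hm := hmeet S hS
        simp only [Finset.mem_sdiff, Finset.mem_powersetCard, Finset.card_map] at hS ⊢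
        refine ⟨⟨fun p hp => ?_, hS.1.2⟩, fun h => ?_⟩
        · rw [Finset.mem_map_equiv, Equiv.symm_swap] at hp
          have hp' := hS.1.1 hp
          rw [Equiv.swap_apply_def] at hp'
          split_ifs at hp' with h1 h2
          · exact h1 ▸ hxU
          · exact h2 ▸ hxU'
          · exact hp'
        · rcases hm with hm | hm
          · have : N - x ∈ V := h.1 (by simpa [Finset.mem_map_equiv] using hm)
            simp [hV] at this
          · have : x ∈ V := h.1 (by simpa [Finset.mem_map_equiv] using hm)
            simp [hV] at this
      · intro S hS
        ext p
        simp [Finset.mem_map_equiv]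
    · push Not at hx
      refine Finset.sum_eq_zero fun S hS => ?_
      rw [Finset.mem_powersetCard] at hS
      by_contra hne
      have hwS : ∀ p ∈ S, w p ≠ 0 := fun p hp h =>
        hne (by rw [Finset.prod_eq_zero hp h, zero_mul])
      have hb' : ∀ p ∈ S, lo ≤ p ∧ p < lo + 2 * ((b : ℤ) - 1) := fun p hp =>
        hU p (hS.1 hp) (hx p (hS.1 hp)) (hwS p hp)
      have hgap : ∀ p ∈ S, ∀ q ∈ S, p < q → p + 1 ≠ q := by
        rintro p hp q hq hpq rfl
        exact hne (by rw [pairProd_eq_zero hp hq hpq (hc1 p), mul_zero])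
      have hcard : S.card ≤ (Finset.range (b - 1)).card := by
        refine Finset.card_le_card_of_injOn (fun p => ((p - lo) / 2).toNat) ?_ ?_
        · intro p hp
          have := hb' p hp
          simp only [Finset.coe_range, Set.mem_Iio]
          omega
        · intro p hp q hq hpq
          have h1 := hb' p hp
          have h2 := hb' q hq
          have h3 := hgap p hp q hq
          have h4 := hgap q hq p hp
          simp only at hpq
          omega
      rw [Finset.card_range, hS.2] at hcard
      omega

theorem pairProd_range_succ (c : ℕ → ℕ → ℝ) (n : ℕ) :
    pairProd c (Finset.range (n + 1)) = (∏ j ∈ Finset.range n, c 0 (j + 1))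
      * pairProd (fun i j => c (i + 1) (j + 1)) (Finset.range n) := by
  unfold pairProd
  rw [Finset.prod_range_succ', mul_comm]
  simp [Finset.prod_range_succ']

theorem pairProd_image_of_strictAnti {c : ℤ → ℤ → ℝ} (hcs : ∀ p q, c p q = c q p)
    {p : ℕ → ℤ} (hp : StrictAnti p) (b : ℕ) :
    pairProd (fun i j => c (p i) (p j)) (Finset.range b)
      = pairProd c ((Finset.range b).image p) := by
  unfold pairProd
  simp only [Finset.prod_image hp.injective.injOn, hp.lt_iff_gt]
  rw [Finset.prod_comm]
  simp only [hcs]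

/-- The contribution to a Vandermonde product of two pairs of nodes `y p, y (p - 1)` and
`y q, y (q - 1)`. -/
noncomputable def dominoPair (y : ℤ → ℝ) (p q : ℤ) : ℝ :=
  (y p - y q) * (y p - y (q - 1)) * (y (p - 1) - y q) * (y (p - 1) - y (q - 1))

/-- The contribution to a Vandermonde product of a pair of nodes `y p, y (p - 1)` followed by
the nodes `t 0, …, t (M - 1)`. -/
noncomputable def dominoWeight (y : ℤ → ℝ) (t : ℕ → ℝ) (M : ℕ) (p : ℤ) : ℝ :=
  (y p - y (p - 1)) * ∏ j ∈ Finset.range M, (y p - t j) * (y (p - 1) - t j)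

theorem dominoPair_comm (y : ℤ → ℝ) (p q : ℤ) : dominoPair y p q = dominoPair y q p := by
  unfold dominoPair
  ring

theorem prod_range_two_mul (g : ℕ → ℝ) (b : ℕ) :
    ∏ j ∈ Finset.range (2 * b), g j = ∏ j ∈ Finset.range b, g (2 * j) * g (2 * j + 1) := by
  induction b with
  | zero => simp
  | succ b ih =>
    rw [mul_add_one, Finset.prod_range_succ, Finset.prod_range_succ, Finset.prod_range_succ, ih,
      mul_assoc]

theorem pairProd_domino (y : ℤ → ℝ) (t : ℕ → ℝ) (M b : ℕ) (f : ℕ → ℝ) (p : ℕ → ℤ)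
    (hf0 : ∀ i < b, f (2 * i) = y (p i)) (hf1 : ∀ i < b, f (2 * i + 1) = y (p i - 1))
    (hft : ∀ j < M, f (2 * b + j) = t j) :
    pairProd (fun i j => f i - f j) (Finset.range (2 * b + M))
      = pairProd (fun i j => t i - t j) (Finset.range M)
        * ((∏ i ∈ Finset.range b, dominoWeight y t M (p i))
          * pairProd (fun i j => dominoPair y (p i) (p j)) (Finset.range b)) := by
  induction b generalizing f p with
  | zero =>
    have : ∀ i ∈ Finset.range M, ∀ j ∈ Finset.range M,
        (if i < j then f i - f j else 1) = if i < j then t i - t j else 1 := by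
      intro i hi j hj
      rw [← hft i (Finset.mem_range.1 hi), ← hft j (Finset.mem_range.1 hj)]
      simp
    simp only [pairProd, mul_zero, zero_add, Finset.range_zero, Finset.prod_empty, mul_one]
    exact Finset.prod_congr rfl fun i hi => Finset.prod_congr rfl fun j hj => this i hi j hj
  | succ b ih =>
    have ih' := ih (fun i => f (i + 2)) (fun i => p (i + 1))
      (fun i hi => hf0 (i + 1) (by omega)) (fun i hi => hf1 (i + 1) (by omega))
      (fun j hj => by rw [← hft j hj]; congr 1; ring)
    rw [show 2 * (b + 1) + M = 2 * b + M + 1 + 1 by ring, pairProd_range_succ,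
      pairProd_range_succ, Finset.prod_range_succ' _ (2 * b + M), ih', Finset.prod_range_succ',
      pairProd_range_succ]
    have h0 : f 0 = y (p 0) := hf0 0 (by omega)
    have h1 : f 1 = y (p 0 - 1) := hf1 0 (by omega)
    have hdom : (∏ j ∈ Finset.range (2 * b + M), (f 0 - f (j + 1 + 1)))
          * ∏ j ∈ Finset.range (2 * b + M), (f (0 + 1) - f (j + 1 + 1))
        = (∏ j ∈ Finset.range b, dominoPair y (p 0) (p (j + 1)))
          * ∏ j ∈ Finset.range M, (y (p 0) - t j) * (y (p 0 - 1) - t j) := by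
      rw [← Finset.prod_mul_distrib, Finset.prod_range_add, prod_range_two_mul, zero_add, h0, h1]
      congr 1
      · refine Finset.prod_congr rfl fun j hj => ?_
        have hj := Finset.mem_range.1 hj
        have e0 : f (2 * j + 1 + 1) = y (p (j + 1)) := hf0 (j + 1) (by omega)
        have e1 : f (2 * j + 1 + 1 + 1) = y (p (j + 1) - 1) := hf1 (j + 1) (by omega)
        rw [e0, e1, dominoPair]
        ring
      · refine Finset.prod_congr rfl fun j hj => ?_
        rw [← hft j (Finset.mem_range.1 hj), show 2 * b + j + 1 + 1 = 2 * (b + 1) + j by ring]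
    have hw : dominoWeight y t M (p 0)
        = (f 0 - f 1) * ∏ j ∈ Finset.range M, (y (p 0) - t j) * (y (p 0 - 1) - t j) := by
      rw [h0, h1, dominoWeight]
    rw [hw]
    linear_combination ((f 0 - f 1) * (pairProd (fun i j => t i - t j) (Finset.range M)
        * ((∏ i ∈ Finset.range b, dominoWeight y t M (p (i + 1)))
          * pairProd (fun i j => dominoPair y (p (i + 1)) (p (j + 1))) (Finset.range b)))) * hdom

/-- The positions `R - 1 - 2 i + ∑_{l ≥ i} c l`. -/
def dominoPos {b : ℕ} (R : ℤ) (c : Fin b → ℕ) (i : ℕ) : ℤ :=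
  R - 1 - 2 * i + ∑ l : Fin b, if i ≤ l then (c l : ℤ) else 0

theorem dominoPos_of_lt {b : ℕ} (R : ℤ) (c : Fin b → ℕ) (i : Fin b) :
    dominoPos R c i = dominoPos R c (i + 1) + 2 + c i := by
  have : ∑ l : Fin b, (if (i : ℕ) ≤ l then (c l : ℤ) else 0)
      = (∑ l : Fin b, if (i : ℕ) + 1 ≤ l then (c l : ℤ) else 0) + c i := by
    have hi : ∑ l : Fin b, (if l = i then (c l : ℤ) else 0) = c i := by simp
    rw [← hi, ← Finset.sum_add_distrib]
    refine Finset.sum_congr rfl fun l _ => ?_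
    simp only [Fin.ext_iff]
    split_ifs <;> omega
  unfold dominoPos
  rw [this]
  push_cast
  ring

theorem dominoPos_of_le {b : ℕ} (R : ℤ) (c : Fin b → ℕ) {i : ℕ} (hi : b ≤ i) :
    dominoPos R c i = R - 1 - 2 * i := by
  unfold dominoPos
  rw [Finset.sum_eq_zero fun l _ => if_neg (by omega), add_zero]

theorem dominoPos_zero {b : ℕ} (R : ℤ) (c : Fin b → ℕ) :
    dominoPos R c 0 = R - 1 + ∑ l, c l := by
  simp [dominoPos]

theorem dominoPos_succ_add_two_le {b : ℕ} (R : ℤ) (c : Fin b → ℕ) (i : ℕ) :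
    dominoPos R c (i + 1) + 2 ≤ dominoPos R c i := by
  rcases lt_or_ge i b with h | h
  · have := dominoPos_of_lt R c ⟨i, h⟩
    simp only at this
    omega
  · rw [dominoPos_of_le R c h, dominoPos_of_le R c (h.trans i.le_succ)]
    push_cast
    linarith

theorem dominoPos_strictAnti {b : ℕ} (R : ℤ) (c : Fin b → ℕ) : StrictAnti (dominoPos R c) :=
  strictAnti_nat_of_succ_lt fun i => by
    have := dominoPos_succ_add_two_le R c i
    omega

theorem sum_image_dominoPos {Γ : Finset ℤ → ℝ} (hΓ : ∀ S p, p ∈ S → p + 1 ∈ S → Γ S = 0)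
    (R : ℤ) (m b : ℕ) :
    ∑ c ∈ (Fintype.piFinset (fun _ : Fin b => Finset.range (m + 1))).filter
        (fun c => ∑ i, c i ≤ m), Γ ((Finset.range b).image (dominoPos R c))
      = ∑ S ∈ (Finset.Icc (R + 1 - 2 * b) (R - 1 + m)).powersetCard b, Γ S := by
  have hcard : ∀ c : Fin b → ℕ, ((Finset.range b).image (dominoPos R c)).card = b := fun c => by
    rw [Finset.card_image_of_injective _ (dominoPos_strictAnti R c).injective, Finset.card_range]
  refine Finset.sum_of_injOn (fun c => (Finset.range b).image (dominoPos R c)) ?_ ?_ ?_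
    fun _ _ => rfl
  · intro c _ c' _ h
    have hsort : ∀ d : Fin b → ℕ,
        (Finset.range b).image (dominoPos R d) = (Finset.range b).image (dominoPos R c) →
        (fun i : Fin b => dominoPos R d (b - 1 - i))
          = ((Finset.range b).image (dominoPos R c)).orderEmbOfFin (hcard c) := by
      intro d hd
      refine Finset.orderEmbOfFin_unique _ (fun i => ?_) fun i j hij => ?_
      · rw [← hd]
        exact Finset.mem_image_of_mem _ (Finset.mem_range.2 (by omega))
      · exact dominoPos_strictAnti R d (by omega)
    have heq := (hsort c rfl).trans (hsort c' h.symm).symm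
    have hpos : ∀ i, dominoPos R c i = dominoPos R c' i := by
      intro i
      rcases lt_or_ge i b with hi | hi
      · have := congrFun heq ⟨b - 1 - i, by omega⟩
        simpa [show b - 1 - (b - 1 - i) = i by omega] using this
      · rw [dominoPos_of_le R c hi, dominoPos_of_le R c' hi]
    funext i
    have h1 := dominoPos_of_lt R c i
    have h2 := dominoPos_of_lt R c' i
    rw [hpos, hpos] at h1
    omega
  · intro c hc
    simp only [Finset.coe_filter, Set.mem_ofPred_eq] at hc
    rw [Finset.mem_coe, Finset.mem_powersetCard]
    refine ⟨fun p hp => ?_, hcard c⟩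
    obtain ⟨i, hi, rfl⟩ := Finset.mem_image.1 hp
    have h0 := (dominoPos_strictAnti R c).antitone (Nat.zero_le i)
    have hlt := Finset.mem_range.1 hi
    have h1 := (dominoPos_strictAnti R c).antitone (show i ≤ b - 1 by omega)
    have h2 := dominoPos_succ_add_two_le R c (b - 1)
    rw [show b - 1 + 1 = b by omega, dominoPos_of_le R c le_rfl] at h2
    rw [dominoPos_zero] at h0
    rw [Finset.mem_Icc]
    constructor
    · omega
    · have : ((∑ l, c l : ℕ) : ℤ) ≤ m := by exact_mod_cast hc.2
      push_cast at this h0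
      omega
  · intro S hS hnot
    by_contra hne
    rw [Finset.mem_powersetCard] at hS
    refine hnot ?_
    let e := S.orderEmbOfFin hS.2
    let P : ℕ → ℤ := fun i => if h : i < b then e ⟨b - 1 - i, by omega⟩ else R - 1 - 2 * i
    have hPmem : ∀ i < b, P i ∈ S := by
      intro i hi
      simp only [P, dif_pos hi]
      exact S.orderEmbOfFin_mem hS.2 _
    have hPgap : ∀ i < b, P (i + 1) + 2 ≤ P i := by
      intro i hi
      have hmem := hPmem i hi
      rcases lt_or_ge (i + 1) b with h | h
      · have hlt : P (i + 1) < P i := by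
          simp only [P, dif_pos hi, dif_pos h]
          exact e.strictMono (by simp only [Fin.mk_lt_mk]; omega)
        have : P (i + 1) + 1 ≠ P i := fun heq =>
          hne (hΓ S _ (hPmem _ h) (heq ▸ hmem))
        omega
      · have := Finset.mem_Icc.1 (hS.1 hmem)
        have hP : P (i + 1) = R - 1 - 2 * ((i + 1 : ℕ) : ℤ) := dif_neg (by omega)
        have : i + 1 = b := by omega
        omega
    let c : Fin b → ℕ := fun l => (P l - P (l + 1) - 2).toNat
    have hpos : ∀ d i, i + d = b → dominoPos R c i = P i := by
      intro d
      induction d with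
      | zero =>
        rintro i hi
        rw [dominoPos_of_le R c (by omega)]
        simp only [P]
        rw [dif_neg (by omega)]
      | succ d ih =>
        intro i hi
        have h1 := dominoPos_of_lt R c ⟨i, by omega⟩
        have h2 := hPgap i (by omega)
        have h3 : (c ⟨i, by omega⟩ : ℤ) = P i - P (i + 1) - 2 :=
          Int.toNat_of_nonneg (by simp only; omega)
        simp only [ih (i + 1) (by omega)] at h1
        omega
    have hsum : ∑ l, c l ≤ m := by
      rcases Nat.eq_zero_or_pos b with rfl | hb
      · simp
      · have h1 := hpos b 0 (by omega)
        have h2 := Finset.mem_Icc.1 (hS.1 (hPmem 0 hb))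
        rw [dominoPos_zero] at h1
        have : ((∑ l, c l : ℕ) : ℤ) ≤ m := by omega
        exact_mod_cast this
    refine ⟨c, ?_, ?_⟩
    · simp only [Finset.coe_filter, Set.mem_ofPred_eq, Fintype.mem_piFinset, Finset.mem_range]
      exact ⟨fun i => Nat.lt_succ_of_le
        ((Finset.single_le_sum (fun _ _ => Nat.zero_le _) (Finset.mem_univ i)).trans hsum), hsum⟩
    · refine Finset.eq_of_subset_of_card_le (fun p hp => ?_) (by rw [hcard, hS.2])
      obtain ⟨i, hi, rfl⟩ := Finset.mem_image.1 hp
      have hi := Finset.mem_range.1 hi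
      rw [hpos (b - i) i (by omega)]
      exact hPmem i hi

theorem sum_domino_eq_zero {y : ℤ → ℝ} {w : ℤ → ℝ} {N R : ℤ} {k b : ℕ} (hb : 0 < b)
    (hy : ∀ t, y (N - 1 - t) = y t) (hw : ∀ p, w (N - p) = -w p) (hN : 2 * R - 1 + k ≤ N)
    (hw0 : ∀ p, R - 1 ≤ p → p < N - R - k → w p = 0) :
    ∑ c ∈ (Fintype.piFinset (fun _ : Fin b => Finset.range (k + 1 + 1))).filter
        (fun c => ∑ i, c i ≤ k + 1),
      (∏ i ∈ Finset.range b, w (dominoPos R c i))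
        * pairProd (fun i j => dominoPair y (dominoPos R c i) (dominoPos R c j))
          (Finset.range b) = 0 := by
  have hc1 : ∀ p, dominoPair y p (p + 1) = 0 := fun p => by simp [dominoPair]
  have hc : ∀ p q, dominoPair y (N - p) q = dominoPair y p q := by
    intro p q
    have h1 : y (N - p) = y (p - 1) := by rw [← hy]; congr 1; ring
    have h2 : y (N - p - 1) = y p := by rw [← hy p]; congr 1; ring
    rw [dominoPair, dominoPair, h1, h2]
    ring
  have hΓ : ∀ (S : Finset ℤ) (p : ℤ), p ∈ S → p + 1 ∈ S →
      (∏ p ∈ S, w p) * pairProd (dominoPair y) S = 0 := fun S p hp hp' => by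
    rw [pairProd_eq_zero hp hp' (lt_add_one p) (hc1 p), mul_zero]
  have hsum := sum_image_dominoPos hΓ R (k + 1) b
  rw [sum_powersetCard_pairProd_eq_zero (N := N) (lo := R + 1 - 2 * b) hb hw (dominoPair_comm y)
    hc (fun p => by simp [dominoPair]) hc1] at hsum
  · rw [← hsum]
    refine Finset.sum_congr rfl fun c _ => ?_
    rw [pairProd_image_of_strictAnti (dominoPair_comm y) (dominoPos_strictAnti R c),
      Finset.prod_image (dominoPos_strictAnti R c).injective.injOn]
  · intro p hp hp' hwp
    have h0 := hw0 p
    simp only [hwp, imp_false] at h0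
    rw [Finset.mem_Icc] at hp hp'
    push_cast at hp hp'
    omega

/-- The squared sine at the node `t`. -/
noncomputable def sinSqNode (r k : ℕ) (t : ℤ) : ℝ :=
  Real.sin (Real.pi * t / (2 * (r : ℝ) - 2 + (k : ℝ))) ^ 2

theorem sinSqNode_reflect {r k : ℕ} (hr : 4 ≤ r) (t : ℤ) :
    sinSqNode r k (2 * r - 1 + k - 1 - t) = sinSqNode r k t := by
  have hr' : (4 : ℝ) ≤ r := by exact_mod_cast hr
  have hk : (0 : ℝ) ≤ k := k.cast_nonneg
  have hn : 2 * (r : ℝ) - 2 + k ≠ 0 := by linarith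
  unfold sinSqNode
  have : Real.pi * ((2 * r - 1 + k - 1 - t : ℤ) : ℝ) / (2 * (r : ℝ) - 2 + k)
      = Real.pi - Real.pi * t / (2 * (r : ℝ) - 2 + k) := by
    rw [eq_sub_iff_add_eq, ← add_div, div_eq_iff hn]
    push_cast
    ring
  rw [this, Real.sin_pi_sub]

theorem sin_sub_mul_sin_add (x z : ℝ) :
    Real.sin (x - z) * Real.sin (x + z) = Real.sin x ^ 2 - Real.sin z ^ 2 := by
  rw [Real.sin_sub, Real.sin_add]
  linear_combination Real.sin x ^ 2 * Real.sin_sq_add_cos_sq z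
    - Real.sin z ^ 2 * Real.sin_sq_add_cos_sq x

theorem prod_Icc_one (g : ℕ → ℝ) (n : ℕ) :
    ∏ i ∈ Finset.Icc 1 n, g i = ∏ i ∈ Finset.range n, g (i + 1) := by
  induction n with
  | zero => simp
  | succ n ih => rw [Finset.prod_Icc_succ_top (by omega), Finset.prod_range_succ, ih]

/-- The integral coordinate `u_{i+1}` of a weight with vanishing spin coordinates. -/
def intCoord (r : ℕ) (lam : ℕ → ℤ) (i : ℕ) : ℤ :=
  (∑ j ∈ Finset.Icc (i + 1) (r - 2), lam j) + r - (i + 1)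

theorem uCoord_eq_intCoord {r : ℕ} (hr : 4 ≤ r) {lam : ℕ → ℤ} (h1 : lam (r - 1) = 0)
    (h2 : lam r = 0) (i : ℕ) : uCoord r lam (i + 1) = intCoord r lam i := by
  unfold uCoord intCoord
  split_ifs with h
  · rw [Finset.Icc_eq_empty (by omega)]
    subst h
    rw [Nat.add_sub_cancel] at h1
    simp [h1, h2]
  · simp [h1, h2]
    ring

theorem exists_qdimD_eq {r : ℕ} (k : ℕ) (hr : 4 ≤ r) :
    ∃ d : ℝ, ∀ lam : ℕ → ℤ, lam (r - 1) = 0 → lam r = 0 →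
      qdimD r k lam = pairProd (fun i j => sinSqNode r k (intCoord r lam i)
        - sinSqNode r k (intCoord r lam j)) (Finset.range r) / d := by
  simp only [qdimD, Finset.prod_div_distrib]
  refine ⟨_, fun lam h1 h2 => congrArg (· / _) ?_⟩
  rw [Finset.prod_filter, Finset.prod_product, prod_Icc_one, pairProd]
  refine Finset.prod_congr rfl fun i _ => ?_
  rw [prod_Icc_one]
  refine Finset.prod_congr rfl fun j _ => ?_
  simp only [add_lt_add_iff_right]
  refine if_congr Iff.rfl ?_ rfl
  rw [uCoord_eq_intCoord hr h1 h2, uCoord_eq_intCoord hr h1 h2, mul_sub, sub_div, mul_add, add_div,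
    sin_sub_mul_sin_add, sinSqNode, sinSqNode]

theorem sum_Icc_sum_ite {b : ℕ} (c : Fin b → ℕ) {o top : ℕ} (ho : ∀ l : Fin b, 2 * l + o ≤ top)
    (s : ℕ) :
    ∑ j ∈ Finset.Icc s top, ∑ l : Fin b, (if j = 2 * (l : ℕ) + o then (c l : ℤ) else 0)
      = ∑ l : Fin b, if s ≤ 2 * (l : ℕ) + o then (c l : ℤ) else 0 := by
  rw [Finset.sum_comm]
  refine Finset.sum_congr rfl fun l _ => ?_
  have := ho l
  simp [this]

theorem dominoWeight_reflect {y : ℤ → ℝ} {N : ℤ} (hy : ∀ t, y (N - 1 - t) = y t)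
    (t : ℕ → ℝ) (M : ℕ) (p : ℤ) :
    dominoWeight y t M (N - p) = -dominoWeight y t M p := by
  have h1 : y (N - p) = y (p - 1) := by rw [← hy]; congr 1; ring
  have h2 : y (N - p - 1) = y p := by rw [← hy p]; congr 1; ring
  unfold dominoWeight
  rw [h1, h2, Finset.prod_congr rfl fun j _ => mul_comm (y (p - 1) - t j) (y p - t j)]
  ring

theorem zD_even_eq_zero {r k b : ℕ} (hr : 4 ≤ r) (hb : 0 < b) (hbr : 2 * b ≤ r - 2) :
    zD r k (2 * b) (k + 1) = 0 := by
  unfold zD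
  rw [if_neg (by omega), if_neg (by omega), Nat.mul_div_cancel_left b two_pos]
  obtain ⟨d, hd⟩ := exists_qdimD_eq k hr
  have hy := sinSqNode_reflect (k := k) hr
  set y := sinSqNode r k
  set t : ℕ → ℝ := fun j => y (r - 2 * b - j - 1) with ht
  have hsum := sum_domino_eq_zero (y := y) (w := dominoWeight y t (r - 2 * b))
    (N := 2 * r - 1 + k) (R := r) (k := k) hb hy
    (dominoWeight_reflect hy t _) (by omega) (fun p _ _ => by omega)
  rw [← mul_zero (pairProd (fun i j => t i - t j) (Finset.range (r - 2 * b)) / d), ← hsum,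
    Finset.mul_sum]
  refine Finset.sum_congr rfl fun c _ => ?_
  have hlam : ∀ j, r - 1 ≤ j →
      ∑ l : Fin b, (if j = 2 * (l : ℕ) + 2 then (c l : ℤ) else 0) = 0 := fun j hj =>
    Finset.sum_eq_zero fun l _ => if_neg (by omega)
  rw [hd _ (hlam _ le_rfl) (hlam _ (by omega))]
  have hcoord : ∀ i, intCoord r
      (fun j => ∑ l : Fin b, if j = 2 * (l : ℕ) + 2 then (c l : ℤ) else 0) i
        = (∑ l : Fin b, if i + 1 ≤ 2 * (l : ℕ) + 2 then (c l : ℤ) else 0) + r - (i + 1) :=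
    fun i => by rw [intCoord, sum_Icc_sum_ite c (by omega)]
  have hprod := pairProd_domino y t (r - 2 * b) b (fun i => y (intCoord r
      (fun j => ∑ l : Fin b, if j = 2 * (l : ℕ) + 2 then (c l : ℤ) else 0) i))
    (dominoPos r c) ?_ ?_ ?_
  · rw [show 2 * b + (r - 2 * b) = r by omega] at hprod
    rw [hprod]
    ring
  · intro i _
    simp only [hcoord, dominoPos]
    congr 1
    rw [Finset.sum_congr rfl fun (l : Fin b) _ => if_congr
      (show 2 * i + 1 ≤ 2 * (l : ℕ) + 2 ↔ i ≤ l by omega) rfl rfl]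
    push_cast
    ring
  · intro i _
    simp only [hcoord, dominoPos]
    congr 1
    rw [Finset.sum_congr rfl fun (l : Fin b) _ => if_congr
      (show 2 * i + 1 + 1 ≤ 2 * (l : ℕ) + 2 ↔ i ≤ l by omega) rfl rfl]
    push_cast
    ring
  · intro j _
    simp only [hcoord, ht]
    congr 1
    rw [Finset.sum_eq_zero fun l _ => if_neg (by omega)]
    push_cast
    ring

/-- Choosing the parts of a composition of `m` into `b + 1` parts amounts to choosing all parts but
the first, with sum at most `m`. -/
theorem sum_composition_eq_sum_tail (b m : ℕ) (g : (Fin (b + 1) → ℕ) → ℝ) :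
    ∑ c ∈ (Fintype.piFinset (fun _ : Fin (b + 1) => Finset.range (m + 1))).filter
        (fun c => ∑ i, c i = m), g c
      = ∑ c ∈ (Fintype.piFinset (fun _ : Fin b => Finset.range (m + 1))).filter
        (fun c => ∑ i, c i ≤ m), g (Fin.cons (m - ∑ i, c i) c) := by
  refine Finset.sum_bij' (fun c _ => Fin.tail c) (fun c _ => Fin.cons (m - ∑ i, c i) c)
    ?_ ?_ ?_ ?_ ?_
  · intro c hc
    simp only [Finset.mem_filter, Fintype.mem_piFinset, Fin.sum_univ_succ] at hc ⊢
    exact ⟨fun i => hc.1 i.succ, by simp only [Fin.tail]; omega⟩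
  · intro c hc
    simp only [Finset.mem_filter, Fintype.mem_piFinset, Fin.sum_univ_succ, Fin.cons_zero,
      Fin.cons_succ] at hc ⊢
    refine ⟨fun i => ?_, by omega⟩
    refine Fin.cases ?_ (fun i => ?_) i
    · simp only [Fin.cons_zero, Finset.mem_range]
      omega
    · simpa using hc.1 i
  · intro c hc
    simp only [Finset.mem_filter, Fin.sum_univ_succ] at hc
    have : m - ∑ i, Fin.tail c i = c 0 := by simp only [Fin.tail]; omega
    rw [this, Fin.cons_self_tail]
  · intro c _
    simp
  · intro c hc
    simp only [Finset.mem_filter, Fin.sum_univ_succ] at hc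
    have : m - ∑ i, Fin.tail c i = c 0 := by simp only [Fin.tail]; omega
    rw [this, Fin.cons_self_tail]

theorem zD_odd_eq_zero {r k b : ℕ} (hr : 4 ≤ r) (hbr : 2 * b + 1 ≤ r - 2) :
    zD r k (2 * b + 1) (k + 1) = 0 := by
  unfold zD
  rw [if_neg (by omega), if_pos (by omega), show (2 * b + 1 + 1) / 2 = b + 1 by omega,
    sum_composition_eq_sum_tail]
  obtain ⟨d, hd⟩ := exists_qdimD_eq k hr
  have hy := sinSqNode_reflect (k := k) hr
  set y := sinSqNode r k
  have hF : y (r + k) = y (r - 2) := by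
    rw [← hy]
    congr 1
    ring
  set M := r - 2 * b - 1 with hM
  set t : ℕ → ℝ := fun j => y (r - 2 * b - j - 2) with ht
  set w : ℤ → ℝ := fun p =>
    (y (r - 2) - y p) * (y (r - 2) - y (p - 1)) * dominoWeight y t M p with hwdef
  set K := (∏ j ∈ Finset.range M, (y (r - 2) - t j))
    * pairProd (fun i j => t i - t j) (Finset.range M) / d with hK
  have hterm : ∀ c ∈ (Fintype.piFinset (fun _ : Fin b => Finset.range (k + 1 + 1))).filter
        (fun c => ∑ i, c i ≤ k + 1),
      qdimD r k (fun j => ∑ i : Fin (b + 1), if j = 2 * (i : ℕ) + 1 then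
        (((Fin.cons (k + 1 - ∑ i, c i) c : Fin (b + 1) → ℕ) i : ℕ) : ℤ) else 0)
      = K * ((∏ i ∈ Finset.range b, w (dominoPos (r - 1) c i))
        * pairProd (fun i j => dominoPair y (dominoPos (r - 1) c i) (dominoPos (r - 1) c j))
          (Finset.range b)) := by
    intro c hc
    rw [Finset.mem_filter] at hc
    have hlam : ∀ j, r - 1 ≤ j → ∑ i : Fin (b + 1), (if j = 2 * (i : ℕ) + 1 then
        (((Fin.cons (k + 1 - ∑ i, c i) c : Fin (b + 1) → ℕ) i : ℕ) : ℤ) else 0) = 0 :=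
      fun j hj => Finset.sum_eq_zero fun l _ => if_neg (by omega)
    rw [hd _ (hlam _ le_rfl) (hlam _ (by omega))]
    have hcoord : ∀ i, intCoord r (fun j => ∑ i : Fin (b + 1), if j = 2 * (i : ℕ) + 1 then
        (((Fin.cons (k + 1 - ∑ i, c i) c : Fin (b + 1) → ℕ) i : ℕ) : ℤ) else 0) i
        = (if i = 0 then ((k + 1 - ∑ i, c i : ℕ) : ℤ) else 0)
          + (∑ l : Fin b, if i ≤ 2 * (l : ℕ) + 2 then (c l : ℤ) else 0) + r - (i + 1) := by
      intro i
      rw [intCoord, sum_Icc_sum_ite _ (by omega), Fin.sum_univ_succ]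
      simp [mul_add]
    set f : ℕ → ℝ := fun i => y (intCoord r (fun j => ∑ i : Fin (b + 1),
      if j = 2 * (i : ℕ) + 1 then
        (((Fin.cons (k + 1 - ∑ i, c i) c : Fin (b + 1) → ℕ) i : ℕ) : ℤ) else 0) i) with hf
    have hf0 : f 0 = y (r - 2) := by
      rw [← hF]
      simp only [hf, hcoord]
      congr 1
      rw [Nat.cast_sub hc.2]
      simp
      ring
    have hfe : ∀ i < b, f (2 * i + 1) = y (dominoPos (r - 1) c i) := by
      intro i _
      simp only [hf, hcoord, dominoPos]
      congr 1
      rw [Finset.sum_congr rfl fun (l : Fin b) _ => if_congr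
        (show 2 * i + 1 ≤ 2 * (l : ℕ) + 2 ↔ i ≤ l by omega) rfl rfl, if_neg (by omega)]
      push_cast
      ring
    have hfo : ∀ i < b, f (2 * i + 1 + 1) = y (dominoPos (r - 1) c i - 1) := by
      intro i _
      simp only [hf, hcoord, dominoPos]
      congr 1
      rw [Finset.sum_congr rfl fun (l : Fin b) _ => if_congr
        (show 2 * i + 1 + 1 ≤ 2 * (l : ℕ) + 2 ↔ i ≤ l by omega) rfl rfl, if_neg (by omega)]
      push_cast
      ring
    have hft : ∀ j < M, f (2 * b + j + 1) = t j := by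
      intro j _
      simp only [hf, hcoord, ht]
      congr 1
      rw [Finset.sum_eq_zero fun l _ => if_neg (by omega), if_neg (by omega)]
      push_cast
      ring
    have hprod := pairProd_domino y t M b (fun i => f (i + 1)) (dominoPos (r - 1) c) hfe hfo hft
    have hhead : ∏ j ∈ Finset.range (2 * b + M), (f 0 - f (j + 1))
        = (∏ i ∈ Finset.range b, (y (r - 2) - y (dominoPos (r - 1) c i))
            * (y (r - 2) - y (dominoPos (r - 1) c i - 1)))
          * ∏ j ∈ Finset.range M, (y (r - 2) - t j) := by
      rw [Finset.prod_range_add, prod_range_two_mul, hf0]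
      congr 1
      · exact Finset.prod_congr rfl fun i hi => by
          rw [hfe i (Finset.mem_range.1 hi), hfo i (Finset.mem_range.1 hi)]
      · exact Finset.prod_congr rfl fun j hj => by rw [hft j (Finset.mem_range.1 hj)]
    have hrange : Finset.range r = Finset.range (2 * b + M + 1) := by
      congr 1
      omega
    rw [hrange, pairProd_range_succ, hprod, hhead, Finset.prod_mul_distrib (f := fun i =>
      (y (r - 2) - y (dominoPos (r - 1) c i)) * (y (r - 2) - y (dominoPos (r - 1) c i - 1))), hK]
    ring
  rw [Finset.sum_congr rfl hterm, ← Finset.mul_sum]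
  rcases Nat.eq_zero_or_pos b with rfl | hb
  · have : K = 0 := by
      rw [hK, Finset.prod_eq_zero (i := 0) (Finset.mem_range.2 (by omega)), zero_mul, zero_div]
      simp [ht]
    rw [this, zero_mul]
  · rw [sum_domino_eq_zero (y := y) (w := w) (N := 2 * r - 1 + k) (R := (r : ℤ) - 1) (k := k) hb
      hy, mul_zero]
    · intro p
      have h1 : y (2 * r - 1 + k - p) = y (p - 1) := by rw [← hy]; congr 1; ring
      have h2 : y (2 * r - 1 + k - p - 1) = y p := by rw [← hy p]; congr 1; ring
      simp only [hwdef]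
      rw [dominoWeight_reflect hy, h1, h2]
      ring
    · omega
    · intro p hp hp'
      have : p = r - 2 ∨ p - 1 = r - 2 := by omega
      rcases this with h | h <;> simp [hwdef, h]

theorem qdimD_spin_eq_zero {r k a : ℕ} (hr : 4 ≤ r) (ha : a = r - 1 ∨ a = r) :
    qdimD r k (fun j => if j = a then ((k + 1 : ℕ) : ℤ) else 0) = 0 := by
  have hr' : (4 : ℝ) ≤ r := by exact_mod_cast hr
  have hk : (0 : ℝ) ≤ k := k.cast_nonneg
  have hn : 2 * (r : ℝ) - 2 + k ≠ 0 := by linarith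
  have hu : ∀ i, i < r - 1 → uCoord r (fun j => if j = a then ((k + 1 : ℕ) : ℤ) else 0) i
      = (k + 1) / 2 + (r - i) := by
    intro i hi
    rw [uCoord, if_neg (by omega), Finset.sum_eq_zero fun j hj => ?_]
    · rcases ha with rfl | rfl
      · simp [show r ≠ r - 1 by omega]
      · simp [show a - 1 ≠ a by omega]
    · rw [Finset.mem_Icc] at hj
      rw [if_neg (by omega), Int.cast_zero]
  refine Finset.prod_eq_zero (i := (1, 2)) (by simp; omega) ?_
  have hpi : Real.pi * (uCoord r (fun j => if j = a then ((k + 1 : ℕ) : ℤ) else 0) 1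
      + uCoord r (fun j => if j = a then ((k + 1 : ℕ) : ℤ) else 0) 2)
        / (2 * (r : ℝ) - 2 + k) = Real.pi := by
    rw [hu 1 (by omega), hu 2 (by omega)]
    rw [div_eq_iff hn]
    push_cast
    ring
  simp only [hpi, Real.sin_pi, mul_zero, zero_div]

/-- The quantum dimension solution of type `D_r` satisfies `z^{(a)}_{k+1} = 0`. -/
theorem stmt13 (r k : ℕ) (hr : 4 ≤ r) (hk : 1 ≤ k)
    (a : ℕ) (ha : a ∈ Finset.Icc 1 r) :
    zD r k a (k + 1) = 0 := by
  rw [Finset.mem_Icc] at ha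
  by_cases hspin : a = r - 1 ∨ a = r
  · rw [zD, if_pos hspin]
    exact qdimD_spin_eq_zero hr hspin
  · obtain ⟨b, rfl | rfl⟩ := Nat.even_or_odd' a
    · exact zD_even_eq_zero hr (by omega) (by omega)
    · exact zD_odd_eq_zero hr (by omega)
end

section
/- The quantum dimension solution of type D_r satisfies z^{(a)}_{k+h} = 1 for every a with 1 ≤ a ≤ r−2; moreover z^{(r−1)}_{k+h} = z^{(r)}_{k+h} and this common value equals 1 or −1. -/
section NilpotentElementarySymmetric

variable {E : Type*} [Ring E]

/-- Sum of `ω p₁ * ⋯ * ω p_s` over the sequences `m + 2 s - 2 ≥ p₁`, `p_s ≥ 0` whose consecutive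
terms decrease by at least two. -/
def gappedSum (ω : ℕ → E) : ℕ → ℕ → E
  | 0, _ => 1
  | s + 1, m => ∑ b ∈ Finset.range (m + 1), ω (b + 2 * s) * gappedSum ω s b

theorem add_pow_succ_of_mul_self_eq_zero {x y : E} (h : Commute x y) (hy : y * y = 0) (s : ℕ) :
    (x + y) ^ (s + 1) = x ^ (s + 1) + ((s + 1 : ℕ) : E) * (y * x ^ s) := by
  induction s with
  | zero => simp
  | succ s ih =>
    have hyx : ∀ n, x ^ n * y = y * x ^ n := fun n => (h.pow_left n).eq
    have hc : ∀ z : E, ((s + 1 : ℕ) : E) * z = z * ((s + 1 : ℕ) : E) :=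
      fun z => Nat.cast_comm _ _
    rw [pow_succ, ih, add_mul, mul_add, mul_add, hyx, ← pow_succ,
      mul_assoc _ (y * x ^ s) x, mul_assoc y, ← pow_succ, mul_assoc _ (y * x ^ s) y, mul_assoc y,
      hyx, ← mul_assoc y y, hy]
    push_cast
    noncomm_ring

variable {ω : ℕ → E}

theorem sum_range_succ_pow (hcomm : ∀ p q, Commute (ω p) (ω q)) (hsq : ∀ p, ω p * ω p = 0)
    (n s : ℕ) :
    (∑ p ∈ Finset.range (n + 1), ω p) ^ (s + 1) = (∑ p ∈ Finset.range n, ω p) ^ (s + 1) +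
      ((s + 1 : ℕ) : E) * (ω n * (∑ p ∈ Finset.range n, ω p) ^ s) := by
  rw [Finset.sum_range_succ]
  exact add_pow_succ_of_mul_self_eq_zero (Commute.sum_left _ _ _ fun p _ => hcomm p n) (hsq n) s

theorem mul_sum_range_succ_pow (hcomm : ∀ p q, Commute (ω p) (ω q))
    (hsq : ∀ p, ω p * ω p = 0) (hadj : ∀ p, ω (p + 1) * ω p = 0) (n s : ℕ) :
    ω (n + 1) * (∑ p ∈ Finset.range (n + 1), ω p) ^ s =
      ω (n + 1) * (∑ p ∈ Finset.range n, ω p) ^ s := by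
  cases s with
  | zero => simp
  | succ s =>
    rw [sum_range_succ_pow hcomm hsq, mul_add, ← mul_assoc _ ((s + 1 : ℕ) : E),
      ← Nat.cast_comm, mul_assoc _ (ω (n + 1)), ← mul_assoc (ω (n + 1)), hadj]
    simp

theorem sum_range_two_mul_pow_succ (hcomm : ∀ p q, Commute (ω p) (ω q))
    (hsq : ∀ p, ω p * ω p = 0) (hadj : ∀ p, ω (p + 1) * ω p = 0) (s : ℕ) :
    (∑ p ∈ Finset.range (2 * s), ω p) ^ (s + 1) = 0 := by
  induction s with
  | zero => simp
  | succ s ih =>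
    rw [show 2 * (s + 1) = 2 * s + 1 + 1 by ring, sum_range_succ_pow hcomm hsq,
      mul_sum_range_succ_pow hcomm hsq hadj, sum_range_succ_pow hcomm hsq, pow_succ _ (s + 1), ih]
    simp

theorem factorial_mul_gappedSum (hcomm : ∀ p q, Commute (ω p) (ω q))
    (hsq : ∀ p, ω p * ω p = 0) (hadj : ∀ p, ω (p + 1) * ω p = 0) (s m : ℕ) :
    (s.factorial : E) * gappedSum ω s m = (∑ p ∈ Finset.range (m + 2 * s - 1), ω p) ^ s := by
  induction s generalizing m with
  | zero => simp [gappedSum]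
  | succ s ih =>
    have step : ∀ b, ((s + 1).factorial : E) * (ω (b + 2 * s) * gappedSum ω s b) =
        ((s + 1 : ℕ) : E) * (ω (b + 2 * s) * (∑ p ∈ Finset.range (b + 2 * s), ω p) ^ s) := by
      intro b
      have h1 : ω (b + 2 * s) * (∑ p ∈ Finset.range (b + 2 * s), ω p) ^ s =
          ω (b + 2 * s) * (∑ p ∈ Finset.range (b + 2 * s - 1), ω p) ^ s := by
        rcases Nat.eq_zero_or_pos (b + 2 * s) with h | h
        · rw [h]
        · obtain ⟨n, hn⟩ := Nat.exists_eq_succ_of_ne_zero h.ne'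
          rw [hn]
          exact mul_sum_range_succ_pow hcomm hsq hadj n s
      rw [h1, ← ih, Nat.factorial_succ, Nat.cast_mul, mul_assoc, ← mul_assoc _ (ω _),
        Nat.cast_comm _ (ω _), mul_assoc (ω _)]
    rw [gappedSum, Finset.mul_sum, Finset.sum_congr rfl fun b _ => step b]
    induction m with
    | zero =>
      rw [show 0 + 2 * (s + 1) - 1 = 2 * s + 1 by omega, sum_range_succ_pow hcomm hsq,
        sum_range_two_mul_pow_succ hcomm hsq hadj]
      simp
    | succ m ihm =>
      rw [Finset.sum_range_succ, ihm, show m + 1 + 2 * (s + 1) - 1 = m + 1 + 2 * s + 1 by omega,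
        sum_range_succ_pow hcomm hsq, show m + 2 * (s + 1) - 1 = m + 1 + 2 * s by omega]

theorem gappedSum_eq_of_period_sum_eq_zero (hcomm : ∀ p q, Commute (ω p) (ω q))
    (hsq : ∀ p, ω p * ω p = 0) (hadj : ∀ p, ω (p + 1) * ω p = 0) [Algebra ℝ E] (N s : ℕ)
    (hper : ∀ t, ∑ p ∈ Finset.range N, ω (t + p) = 0) : gappedSum ω s N = gappedSum ω s 0 := by
  cases s with
  | zero => rfl
  | succ s =>
    have h : (((s + 1).factorial : ℕ) : E) * gappedSum ω (s + 1) N =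
        (((s + 1).factorial : ℕ) : E) * gappedSum ω (s + 1) 0 := by
      rw [factorial_mul_gappedSum hcomm hsq hadj, factorial_mul_gappedSum hcomm hsq hadj,
        show N + 2 * (s + 1) - 1 = (0 + 2 * (s + 1) - 1) + N by omega, Finset.sum_range_add, hper,
        add_zero]
    have hinv : algebraMap ℝ E (((s + 1).factorial : ℝ)⁻¹) * (((s + 1).factorial : ℕ) : E) = 1 := by
      rw [← map_natCast (algebraMap ℝ E), ← map_mul,
        inv_mul_cancel₀ (Nat.cast_ne_zero.2 (Nat.factorial_ne_zero _)), map_one]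
    simpa [← mul_assoc, hinv] using congrArg (algebraMap ℝ E (((s + 1).factorial : ℝ)⁻¹) * ·) h

end NilpotentElementarySymmetric

section Compositions

/-- The tail sum `c j + c (j + 1) + ⋯`. -/
def tailSum {s : ℕ} (c : Fin s → ℕ) (j : ℕ) : ℕ := ∑ i : Fin s, if j ≤ i then c i else 0

theorem tailSum_zero {s : ℕ} (c : Fin s → ℕ) : tailSum c 0 = ∑ i, c i := by simp [tailSum]

theorem tailSum_eq_zero {s : ℕ} (c : Fin s → ℕ) {j : ℕ} (h : s ≤ j) : tailSum c j = 0 :=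
  Finset.sum_eq_zero fun i _ => if_neg (by omega)

theorem tailSum_cons_succ {s : ℕ} (x : ℕ) (c : Fin s → ℕ) (j : ℕ) :
    tailSum (Fin.cons x c : Fin (s + 1) → ℕ) (j + 1) = tailSum c j := by
  simp [tailSum, Fin.sum_univ_succ]

/-- Tuples of natural numbers with sum at most `m`. -/
def tuplesLE (s m : ℕ) : Finset (Fin s → ℕ) :=
  (Fintype.piFinset (fun _ : Fin s => Finset.range (m + 1))).filter (fun c => ∑ i, c i ≤ m)

/-- Tuples of natural numbers with sum `m`. -/
def tuplesEq (s m : ℕ) : Finset (Fin s → ℕ) :=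
  (Fintype.piFinset (fun _ : Fin s => Finset.range (m + 1))).filter (fun c => ∑ i, c i = m)

theorem mem_tuplesLE {s m : ℕ} {c : Fin s → ℕ} : c ∈ tuplesLE s m ↔ ∑ i, c i ≤ m := by
  simp only [tuplesLE, Finset.mem_filter, Fintype.mem_piFinset, Finset.mem_range,
    and_iff_right_iff_imp]
  intro h i
  have := Finset.single_le_sum (f := c) (fun _ _ => Nat.zero_le _) (Finset.mem_univ i)
  omega

theorem mem_tuplesEq {s m : ℕ} {c : Fin s → ℕ} : c ∈ tuplesEq s m ↔ ∑ i, c i = m := by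
  simp only [tuplesEq, Finset.mem_filter, Fintype.mem_piFinset, Finset.mem_range,
    and_iff_right_iff_imp]
  intro h i
  have := Finset.single_le_sum (f := c) (fun _ _ => Nat.zero_le _) (Finset.mem_univ i)
  omega

variable {E : Type*}

theorem sum_tuplesEq_succ [AddCommMonoid E] (s m : ℕ) (f : (Fin (s + 1) → ℕ) → E) :
    ∑ c ∈ tuplesEq (s + 1) m, f c =
      ∑ c ∈ tuplesLE s m, f (Fin.cons (m - ∑ i, c i) c) := by
  refine Finset.sum_nbij' Fin.tail (fun c => Fin.cons (m - ∑ i, c i) c) ?_ ?_ ?_ ?_ ?_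
  · intro c hc
    rw [mem_tuplesEq, Fin.sum_univ_succ] at hc
    rw [mem_tuplesLE]
    simp only [Fin.tail]
    omega
  · intro c hc
    rw [mem_tuplesLE] at hc
    rw [mem_tuplesEq, Fin.sum_univ_succ]
    simp only [Fin.cons_zero, Fin.cons_succ]
    omega
  · intro c hc
    rw [mem_tuplesEq, Fin.sum_univ_succ] at hc
    have : m - ∑ i, Fin.tail c i = c 0 := by simp only [Fin.tail]; omega
    simp [this]
  · intro c _
    simp
  · intro c hc
    rw [mem_tuplesEq, Fin.sum_univ_succ] at hc
    have : m - ∑ i, Fin.tail c i = c 0 := by simp only [Fin.tail]; omega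
    simp [this]

theorem sum_tuplesLE [AddCommMonoid E] (s m : ℕ) (f : (Fin s → ℕ) → E) :
    ∑ c ∈ tuplesLE s m, f c = ∑ b ∈ Finset.range (m + 1), ∑ c ∈ tuplesEq s b, f c := by
  rw [← Finset.sum_fiberwise_of_maps_to (s := tuplesLE s m) (t := Finset.range (m + 1))
    (g := fun c => ∑ i, c i) fun c hc => by
      rw [mem_tuplesLE] at hc
      exact Finset.mem_range.2 (by omega)]
  refine Finset.sum_congr rfl fun b hb => Finset.sum_congr ?_ fun _ _ => rfl
  ext c
  rw [Finset.mem_filter, mem_tuplesLE, mem_tuplesEq]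
  rw [Finset.mem_range] at hb
  omega

theorem sum_tuplesLE_prod_eq_gappedSum [Ring E] (ω : ℕ → E) (s m : ℕ) :
    ∑ c ∈ tuplesLE s m,
      ((List.range s).map fun j => ω (tailSum c j + 2 * (s - 1 - j))).prod = gappedSum ω s m := by
  induction s generalizing m with
  | zero =>
    have : tuplesLE 0 m = Finset.univ := by
      ext c
      simp only [mem_tuplesLE, Finset.univ_eq_empty, Finset.sum_empty, Nat.zero_le, Finset.mem_univ]
    simp [gappedSum, this]
  | succ s ih =>
    rw [sum_tuplesLE, gappedSum]
    refine Finset.sum_congr rfl fun b _ => ?_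
    rw [sum_tuplesEq_succ, ← ih, Finset.mul_sum]
    refine Finset.sum_congr rfl fun c hc => ?_
    rw [mem_tuplesLE] at hc
    rw [List.range_succ_eq_map, List.map_cons, List.prod_cons, List.map_map, tailSum_zero,
      Fin.sum_univ_succ]
    simp only [Fin.cons_zero, Fin.cons_succ, Function.comp_def, Nat.succ_eq_add_one,
      tailSum_cons_succ]
    rw [Nat.sub_add_cancel hc]
    simp only [show ∀ j, s + 1 - 1 - (j + 1) = s - 1 - j by intro j; omega]
    rfl

theorem List.prod_map_range_two_mul [Monoid E] (g : ℕ → E) (s : ℕ) :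
    ((List.range (2 * s)).map g).prod =
      ((List.range s).map fun j => g (2 * j) * g (2 * j + 1)).prod := by
  induction s with
  | zero => simp
  | succ s ih =>
    rw [show 2 * (s + 1) = 2 * s + 1 + 1 by ring, List.range_succ, List.range_succ,
      List.range_succ (n := s)]
    simp [ih]

end Compositions

section Exterior

open ExteriorAlgebra

variable {M : Type*} [AddCommGroup M] [Module ℝ M]

theorem ι_mul_ι_comm (x y : M) : ι ℝ x * ι ℝ y = -(ι ℝ y * ι ℝ x) :=
  eq_neg_of_add_eq_zero_left (ι_add_mul_swap x y)

/-- The bivector `e_{p+1} ∧ e_p`. -/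
noncomputable def adjacentBivector (e : ℕ → M) (p : ℕ) : ExteriorAlgebra ℝ M :=
  ι ℝ (e (p + 1)) * ι ℝ (e p)

theorem adjacentBivector_commute_ι (e : ℕ → M) (p : ℕ) (x : M) :
    Commute (adjacentBivector e p) (ι ℝ x) := by
  rw [Commute, SemiconjBy, adjacentBivector, mul_assoc, ι_mul_ι_comm (e p), mul_neg, ← mul_assoc,
    ι_mul_ι_comm _ x, neg_mul, neg_neg, mul_assoc]

theorem adjacentBivector_commute (e : ℕ → M) (p q : ℕ) :
    Commute (adjacentBivector e p) (adjacentBivector e q) :=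
  (adjacentBivector_commute_ι e p _).mul_right (adjacentBivector_commute_ι e p _)

theorem adjacentBivector_mul_self (e : ℕ → M) (p : ℕ) :
    adjacentBivector e p * adjacentBivector e p = 0 := by
  nth_rewrite 2 [adjacentBivector]
  rw [← mul_assoc, (adjacentBivector_commute_ι e p _).eq, adjacentBivector, ← mul_assoc, ι_sq_zero,
    zero_mul, zero_mul]

theorem adjacentBivector_succ_mul (e : ℕ → M) (p : ℕ) :
    adjacentBivector e (p + 1) * adjacentBivector e p = 0 := by
  rw [adjacentBivector, adjacentBivector, mul_assoc, ← mul_assoc (ι ℝ (e (p + 1))), ι_sq_zero,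
    zero_mul, mul_zero]

theorem sum_period_adjacentBivector (e : ℕ → M) (N : ℕ) (hper : ∀ p, e (p + N) = e p)
    (hrefl : ∀ p ≤ N, e (N - p) = e p) (t : ℕ) :
    ∑ p ∈ Finset.range N, adjacentBivector e (t + p) = 0 := by
  have hω : ∀ p, adjacentBivector e (p + N) = adjacentBivector e p := fun p => by
    rw [adjacentBivector, add_right_comm, hper, hper, adjacentBivector]
  induction t with
  | zero =>
    simp only [zero_add]
    have h : ∑ p ∈ Finset.range N, adjacentBivector e p =
        -∑ p ∈ Finset.range N, adjacentBivector e p := by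
      conv_lhs => rw [← Finset.sum_range_reflect]
      rw [← Finset.sum_neg_distrib]
      refine Finset.sum_congr rfl fun p hp => ?_
      rw [Finset.mem_range] at hp
      rw [adjacentBivector, show N - 1 - p + 1 = N - p by omega, show N - 1 - p = N - (p + 1) by omega,
        hrefl p (by omega), hrefl (p + 1) (by omega), ι_mul_ι_comm, adjacentBivector]
    have h2 : (2 : ℝ) • ∑ p ∈ Finset.range N, adjacentBivector e p = 0 := by
      rw [two_smul]
      nth_rewrite 2 [h]
      exact add_neg_cancel _
    simpa using h2
  | succ t ih =>
    have h := Finset.sum_range_succ' (fun p => adjacentBivector e (t + p)) N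
    rw [Finset.sum_range_succ, ih, hω] at h
    simp only [add_zero, zero_add] at h
    rw [← add_eq_right.1 h.symm]
    exact Finset.sum_congr rfl fun p _ => by rw [add_right_comm, add_assoc]

theorem gappedSum_adjacentBivector (e : ℕ → M) (N : ℕ) (hper : ∀ p, e (p + N) = e p)
    (hrefl : ∀ p ≤ N, e (N - p) = e p) (A s : ℕ) :
    gappedSum (fun p => adjacentBivector e (A + p)) s N =
      gappedSum (fun p => adjacentBivector e (A + p)) s 0 :=
  gappedSum_eq_of_period_sum_eq_zero (ω := fun p => adjacentBivector e (A + p))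
    (fun _ _ => adjacentBivector_commute e _ _) (fun _ => adjacentBivector_mul_self e _)
    (fun _ => adjacentBivector_succ_mul e _) N s fun t => by
      simpa only [add_assoc] using sum_period_adjacentBivector e N hper hrefl (A + t)

/-- The wedge of the `e`-vectors of all the coordinates of `λ + ρ`, when the `q`-th coordinate of
`λ` (`q ≥ 0`) is the tail sum of index `q / 2`. -/
theorem sum_tuplesLE_wedge_even (e : ℕ → M) (r s m : ℕ) (hs : 2 * s ≤ r) :
    ∑ c ∈ tuplesLE s m, ((List.range r).map fun q => ι ℝ (e (tailSum c (q / 2) + (r - 1 - q)))).prod =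
      gappedSum (fun p => adjacentBivector e (r - 2 * s + p)) s m *
        ((List.range (r - 2 * s)).map fun q => ι ℝ (e (r - 1 - (2 * s + q)))).prod := by
  rw [← sum_tuplesLE_prod_eq_gappedSum, Finset.sum_mul]
  refine Finset.sum_congr rfl fun c _ => ?_
  rw [show List.range r = List.range (2 * s + (r - 2 * s)) by congr 1; omega,
    List.range_add, List.map_append, List.prod_append, List.map_map, List.prod_map_range_two_mul]
  congr 2
  · refine List.map_congr_left fun j hj => ?_
    rw [List.mem_range] at hj
    rw [adjacentBivector]
    congr 3
    · rw [show 2 * j / 2 = j by omega]; omega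
    · rw [show (2 * j + 1) / 2 = j by omega]; omega
  · refine List.map_congr_left fun j _ => ?_
    rw [Function.comp_apply, tailSum_eq_zero c (by omega), zero_add]

/-- The wedge of the `e`-vectors of all the coordinates of `λ + ρ`, when the `q`-th coordinate of
`λ` (`q ≥ 0`) is the tail sum of index `(q + 1) / 2`. -/
theorem sum_tuplesEq_wedge_odd (e : ℕ → M) (r s m : ℕ) (hs : 2 * s + 1 ≤ r) :
    ∑ c ∈ tuplesEq (s + 1) m,
      ((List.range r).map fun q => ι ℝ (e (tailSum c ((q + 1) / 2) + (r - 1 - q)))).prod =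
      ι ℝ (e (m + (r - 1))) * (gappedSum (fun p => adjacentBivector e (r - 1 - 2 * s + p)) s m *
        ((List.range (r - 1 - 2 * s)).map fun q => ι ℝ (e (r - 1 - 1 - (2 * s + q)))).prod) := by
  rw [sum_tuplesEq_succ, ← sum_tuplesLE_wedge_even e (r - 1) s m (by omega), Finset.mul_sum]
  refine Finset.sum_congr rfl fun c hc => ?_
  rw [mem_tuplesLE] at hc
  rw [show List.range r = List.range ((r - 1) + 1) by congr 1; omega,
    List.range_succ_eq_map, List.map_cons, List.prod_cons, List.map_map]
  congr 1
  · rw [show (0 + 1) / 2 = 0 by rfl, tailSum_zero, Fin.sum_univ_succ]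
    simp only [Fin.cons_zero, Fin.cons_succ]
    rw [Nat.sub_add_cancel hc, Nat.sub_zero]
  · congr 1
    refine List.map_congr_left fun j _ => ?_
    rw [Function.comp_apply, show (j.succ + 1) / 2 = j / 2 + 1 by omega, tailSum_cons_succ,
      show r - 1 - j.succ = r - 1 - 1 - j by omega]

end Exterior

section QuantumDimension

open ExteriorAlgebra Real

/-- The row `(1, x, …, x ^ (r - 1))` of a Vandermonde matrix at `x = cos (2 π p / N)`. -/
noncomputable def cosRow (N r p : ℕ) : Fin r → ℝ := fun j => cos (2 * π * p / N) ^ (j : ℕ)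

theorem cosRow_add_period {N : ℕ} (hN : N ≠ 0) (r p : ℕ) : cosRow N r (p + N) = cosRow N r p := by
  have hN' : (N : ℝ) ≠ 0 := Nat.cast_ne_zero.2 hN
  funext j
  rw [cosRow, cosRow, ← cos_add_two_pi (2 * π * p / N)]
  congr 2
  push_cast
  field_simp

theorem cosRow_sub {N : ℕ} (hN : N ≠ 0) (r p : ℕ) (hp : p ≤ N) :
    cosRow N r (N - p) = cosRow N r p := by
  have hN' : (N : ℝ) ≠ 0 := Nat.cast_ne_zero.2 hN
  funext j
  rw [cosRow, cosRow, ← cos_two_pi_sub (2 * π * p / N), Nat.cast_sub hp]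
  congr 2
  field_simp

/-- The linear form on the exterior algebra of `ℝ ^ r` given by the determinant in degree `r`. -/
noncomputable def detForm (r : ℕ) : ExteriorAlgebra ℝ (Fin r → ℝ) →ₗ[ℝ] ℝ :=
  liftAlternating (Pi.single r Matrix.detRowAlternating)

theorem detForm_wedge (r : ℕ) (v : ℕ → Fin r → ℝ) :
    detForm r ((List.range r).map fun q => ι ℝ (v q)).prod =
      Matrix.det (Matrix.of fun i : Fin r => v i) := by
  have h : (List.range r).map (fun q => ι ℝ (v q)) = List.ofFn fun i : Fin r => ι ℝ (v i) := by
    rw [List.ofFn_eq_map, ← List.map_coe_finRange_eq_range, List.map_map]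
    rfl
  rw [h, ← ιMulti_apply (R := ℝ) (v := fun i : Fin r => v i), detForm, liftAlternating_apply_ιMulti,
    Pi.single_eq_same]
  rfl

theorem sin_sub_mul_sin_add_s17 (u v N : ℝ) :
    sin (π * (u - v) / N) * sin (π * (u + v) / N) =
      (cos (2 * π * v / N) - cos (2 * π * u / N)) / 2 := by
  rw [cos_sub_cos]
  have h1 : (2 * π * v / N + 2 * π * u / N) / 2 = π * (u + v) / N := by ring
  have h2 : (2 * π * v / N - 2 * π * u / N) / 2 = -(π * (u - v) / N) := by ring
  rw [h1, h2, sin_neg]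
  ring

theorem prod_pairs_sub_eq_det_vandermonde (r : ℕ) (y : ℕ → ℝ) :
    ∏ p ∈ (Finset.Icc 1 r ×ˢ Finset.Icc 1 r).filter (fun p => p.1 < p.2), (y p.2 - y p.1) =
      Matrix.det (Matrix.vandermonde fun i : Fin r => y (i + 1)) := by
  rw [Matrix.det_vandermonde, Finset.prod_sigma']
  symm
  refine Finset.prod_bij (fun x _ => ((x.1 : ℕ) + 1, (x.2 : ℕ) + 1)) ?_ ?_ ?_ ?_
  · rintro ⟨i, j⟩ h
    simp only [Finset.mem_sigma, Finset.mem_univ, Finset.mem_Ioi, true_and, Fin.lt_def] at h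
    simp only [Finset.mem_filter, Finset.mem_product, Finset.mem_Icc]
    omega
  · rintro ⟨i, j⟩ _ ⟨i', j'⟩ _ h
    simp only [Prod.mk.injEq, Nat.add_right_cancel_iff, Fin.val_inj] at h
    rw [h.1, h.2]
  · rintro ⟨i, j⟩ h
    simp only [Finset.mem_filter, Finset.mem_product, Finset.mem_Icc] at h
    refine ⟨⟨⟨i - 1, by omega⟩, ⟨j - 1, by omega⟩⟩, ?_, ?_⟩
    · simp only [Finset.mem_sigma, Finset.mem_univ, Finset.mem_Ioi, true_and, Fin.lt_def]
      omega
    · simp only [Prod.mk.injEq]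
      omega
  · rintro ⟨i, j⟩ _
    rfl

theorem cast_coxeter_add {r : ℕ} (k : ℕ) (hr : 1 ≤ r) :
    2 * (r : ℝ) - 2 + (k : ℝ) = ((k + 2 * r - 2 : ℕ) : ℝ) := by
  rw [Nat.cast_sub (by omega)]
  push_cast
  ring

/-- The Weyl denominator of the level-`k` quantum dimension. -/
noncomputable def qdenom (r k : ℕ) : ℝ :=
  ∏ p ∈ (Finset.Icc 1 r ×ˢ Finset.Icc 1 r).filter (fun p => p.1 < p.2),
    2 * (sin (π * ((p.2 : ℝ) - (p.1 : ℝ)) / (2 * (r : ℝ) - 2 + (k : ℝ)))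
      * sin (π * (2 * (r : ℝ) - (p.1 : ℝ) - (p.2 : ℝ)) / (2 * (r : ℝ) - 2 + (k : ℝ))))

theorem qdimD_eq_detForm (r k : ℕ) (hr : 1 ≤ r) (lam : ℕ → ℤ) (v : ℕ → ℕ)
    (hv : ∀ q < r, uCoord r lam (q + 1) = v q) :
    qdimD r k lam =
      detForm r ((List.range r).map fun q => ι ℝ (cosRow (k + 2 * r - 2) r (v q))).prod /
        qdenom r k := by
  have h := prod_pairs_sub_eq_det_vandermonde r
    fun i => cos (2 * π * uCoord r lam i / (2 * (r : ℝ) - 2 + (k : ℝ)))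
  have hm : Matrix.vandermonde (fun i : Fin r =>
      cos (2 * π * uCoord r lam (i + 1) / (2 * (r : ℝ) - 2 + (k : ℝ)))) =
      Matrix.of fun i : Fin r => cosRow (k + 2 * r - 2) r (v i) := by
    ext i j
    rw [Matrix.vandermonde_apply, hv i i.2, cast_coxeter_add k hr, Matrix.of_apply, cosRow]
  rw [detForm_wedge, ← hm, ← h, qdenom, ← Finset.prod_div_distrib, qdimD]
  refine Finset.prod_congr rfl fun p _ => ?_
  rw [sin_sub_mul_sin_add_s17, div_div]

theorem sin_pi_mul_div_pos {x N : ℝ} (hx : 0 < x) (hxN : x < N) : 0 < sin (π * x / N) := by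
  have hN : 0 < N := hx.trans hxN
  refine sin_pos_of_pos_of_lt_pi (by positivity) ?_
  rw [div_lt_iff₀ hN]
  exact mul_lt_mul_of_pos_left hxN pi_pos

theorem qdim_factor_denom_pos {r k i j : ℕ} (hi : 1 ≤ i) (hij : i < j) (hj : j ≤ r) (hk : 1 ≤ k) :
    0 < sin (π * ((j : ℝ) - (i : ℝ)) / (2 * (r : ℝ) - 2 + (k : ℝ)))
      * sin (π * (2 * (r : ℝ) - (i : ℝ) - (j : ℝ)) / (2 * (r : ℝ) - 2 + (k : ℝ))) := by
  have h1 : (1 : ℝ) ≤ i := by exact_mod_cast hi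
  have h2 : (i : ℝ) + 1 ≤ j := by exact_mod_cast hij
  have h3 : (j : ℝ) ≤ r := by exact_mod_cast hj
  have h4 : (1 : ℝ) ≤ k := by exact_mod_cast hk
  exact mul_pos (sin_pi_mul_div_pos (by linarith) (by linarith))
    (sin_pi_mul_div_pos (by linarith) (by linarith))

theorem uCoord_zero (r i : ℕ) : uCoord r 0 i = (r : ℝ) - i := by
  rw [uCoord]
  split_ifs with h
  · simp [h]
  · simp

theorem qdimD_zero (r k : ℕ) (hk : 1 ≤ k) : qdimD r k 0 = 1 := by
  rw [qdimD]
  refine Finset.prod_eq_one fun p hp => ?_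
  simp only [Finset.mem_filter, Finset.mem_product, Finset.mem_Icc] at hp
  rw [uCoord_zero, uCoord_zero, show (r : ℝ) - p.1 - (r - p.2) = p.2 - p.1 by ring,
    show (r : ℝ) - p.1 + (r - p.2) = 2 * r - p.1 - p.2 by ring]
  exact div_self (qdim_factor_denom_pos hp.1.1.1 hp.2 hp.1.2.2 hk).ne'

/-- Translating all coordinates of `λ + ρ` by half of the period, up to the sign of the last one,
changes the sign of every factor of the quantum dimension. -/
theorem qdimD_eq_neg_one_pow (r k : ℕ) (hk : 1 ≤ k) (lam : ℕ → ℤ)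
    (hlam : ∀ i, cos (2 * π * uCoord r lam i / (2 * (r : ℝ) - 2 + (k : ℝ))) =
      -cos (2 * π * ((r : ℝ) - i) / (2 * (r : ℝ) - 2 + (k : ℝ)))) :
    qdimD r k lam =
      (-1) ^ ((Finset.Icc 1 r ×ˢ Finset.Icc 1 r).filter (fun p => p.1 < p.2)).card := by
  rw [qdimD]
  refine Finset.prod_eq_pow_card fun p hp => ?_
  simp only [Finset.mem_filter, Finset.mem_product, Finset.mem_Icc] at hp
  have h := (qdim_factor_denom_pos hp.1.1.1 hp.2 hp.1.2.2 hk).ne'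
  have hd := sin_sub_mul_sin_add_s17 ((r : ℝ) - p.1) (r - p.2) (2 * (r : ℝ) - 2 + (k : ℝ))
  rw [show (r : ℝ) - p.1 - (r - p.2) = p.2 - p.1 by ring,
    show (r : ℝ) - p.1 + (r - p.2) = 2 * r - p.1 - p.2 by ring] at hd
  rw [div_eq_iff h, sin_sub_mul_sin_add_s17, hlam, hlam, hd]
  ring

theorem cos_uCoord_spin (r k : ℕ) (hr : 2 ≤ r) (hk : 1 ≤ k) (a : ℕ) (ha : a = r - 1 ∨ a = r)
    (i : ℕ) :
    cos (2 * π * uCoord r (fun j => if j = a then ((k + 2 * r - 2 : ℕ) : ℤ) else 0) i /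
        (2 * (r : ℝ) - 2 + (k : ℝ))) =
      -cos (2 * π * ((r : ℝ) - i) / (2 * (r : ℝ) - 2 + (k : ℝ))) := by
  rw [cast_coxeter_add k (by omega)]
  have hN : (((k + 2 * r - 2 : ℕ) : ℝ)) ≠ 0 := Nat.cast_ne_zero.2 (by omega)
  generalize k + 2 * r - 2 = N at hN
  have hsum : ∑ j ∈ Finset.Icc i (r - 2), (((if j = a then (N : ℤ) else 0 : ℤ)) : ℝ) = 0 := by
    refine Finset.sum_eq_zero fun j hj => ?_
    rw [Finset.mem_Icc] at hj
    rw [if_neg (by omega), Int.cast_zero]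
  have hlast : (((if r = a then (N : ℤ) else 0 : ℤ)) : ℝ) = N ∧
        (((if r - 1 = a then (N : ℤ) else 0 : ℤ)) : ℝ) = 0 ∨
      (((if r = a then (N : ℤ) else 0 : ℤ)) : ℝ) = 0 ∧
        (((if r - 1 = a then (N : ℤ) else 0 : ℤ)) : ℝ) = N := by
    rcases ha with rfl | rfl
    · right
      rw [if_neg (by omega), if_pos rfl]
      simp
    · left
      rw [if_neg (by omega : ¬ a - 1 = a), if_pos rfl]
      simp
  rw [uCoord]
  by_cases hi : i = r
  · rw [if_pos hi, hi, sub_self, mul_zero, zero_div, cos_zero]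
    rcases hlast with ⟨h1, h2⟩ | ⟨h1, h2⟩
    · rw [h1, h2, ← cos_pi]
      congr 1
      field_simp
      ring
    · rw [h1, h2, ← cos_pi, ← cos_neg]
      congr 1
      field_simp
      ring
  · rw [if_neg hi, hsum, ← cos_add_pi]
    congr 1
    rcases hlast with ⟨h1, h2⟩ | ⟨h1, h2⟩
    all_goals
      rw [h1, h2]
      field_simp
      ring

theorem uCoord_of_vanishing (r : ℕ) (lam : ℕ → ℤ) (h₁ : lam (r - 1) = 0) (h₀ : lam r = 0) (i : ℕ)
    (hr : 2 ≤ r) :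
    uCoord r lam i = ((∑ j ∈ Finset.Icc i (r - 2), lam j : ℤ) : ℝ) + ((r : ℝ) - i) := by
  rw [uCoord, h₁, h₀]
  split_ifs with h
  · rw [h, Finset.Icc_eq_empty (by omega)]
    simp
  · push_cast
    ring

/-- Coordinates of `λ + ρ` for `λ = c_0 ω_{d} + c_1 ω_{d + 2} + ⋯`. -/
theorem uCoord_alternating (r s d : ℕ) (hd : 1 ≤ d) (hd2 : d ≤ 2) (hs : 2 * s + d ≤ r) (hr : 2 ≤ r)
    (c : Fin s → ℕ) (q : ℕ) (hq : q < r) :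
    uCoord r (fun j => ∑ i : Fin s, if j = 2 * (i : ℕ) + d then (c i : ℤ) else 0) (q + 1) =
      ((tailSum c ((q + 2 - d) / 2) + (r - 1 - q) : ℕ) : ℝ) := by
  rw [uCoord_of_vanishing r _ (Finset.sum_eq_zero fun i _ => if_neg (by omega))
    (Finset.sum_eq_zero fun i _ => if_neg (by omega)) _ hr, Finset.sum_comm]
  have h : ∑ i : Fin s, ∑ j ∈ Finset.Icc (q + 1) (r - 2),
      (if j = 2 * (i : ℕ) + d then (c i : ℤ) else 0) = (tailSum c ((q + 2 - d) / 2) : ℤ) := by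
    rw [tailSum]
    push_cast
    refine Finset.sum_congr rfl fun i _ => ?_
    rw [Finset.sum_ite_eq']
    refine if_congr ?_ rfl rfl
    rw [Finset.mem_Icc]
    have := i.2
    omega
  rw [h, show r - 1 - q = r - (q + 1) by omega, Nat.cast_add (tailSum _ _), Nat.cast_sub (by omega)]
  push_cast
  ring

theorem zD_even (r k s m : ℕ) (hs : 2 * s + 2 ≤ r) :
    zD r k (2 * s) m = detForm r (gappedSum (fun p =>
      adjacentBivector (cosRow (k + 2 * r - 2) r) (r - 2 * s + p)) s m *
        ((List.range (r - 2 * s)).map fun q =>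
          ι ℝ (cosRow (k + 2 * r - 2) r (r - 1 - (2 * s + q)))).prod) / qdenom r k := by
  rw [← sum_tuplesLE_wedge_even _ r s m (by omega), map_sum, Finset.sum_div, zD,
    if_neg (by omega), if_neg (by omega), show 2 * s / 2 = s by omega]
  refine Finset.sum_congr rfl fun c _ => ?_
  exact qdimD_eq_detForm r k (by omega) _ _ fun q hq =>
    uCoord_alternating r s 2 (by omega) le_rfl (by omega) (by omega) c q hq

theorem zD_odd (r k s m : ℕ) (hs : 2 * s + 3 ≤ r) :
    zD r k (2 * s + 1) m = detForm r (ι ℝ (cosRow (k + 2 * r - 2) r (m + (r - 1))) *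
      (gappedSum (fun p =>
        adjacentBivector (cosRow (k + 2 * r - 2) r) (r - 1 - 2 * s + p)) s m *
        ((List.range (r - 1 - 2 * s)).map fun q =>
          ι ℝ (cosRow (k + 2 * r - 2) r (r - 1 - 1 - (2 * s + q)))).prod)) / qdenom r k := by
  rw [← sum_tuplesEq_wedge_odd _ r s m (by omega), map_sum, Finset.sum_div, zD,
    if_neg (by omega), if_pos (by omega), show (2 * s + 1 + 1) / 2 = s + 1 by omega]
  refine Finset.sum_congr rfl fun c _ => ?_
  exact qdimD_eq_detForm r k (by omega) _ _ fun q hq =>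
    uCoord_alternating r (s + 1) 1 le_rfl (by omega) (by omega) (by omega) c q hq

theorem zD_zero (r k a : ℕ) (hk : 1 ≤ k) : zD r k a 0 = 1 := by
  have hz := qdimD_zero r k hk
  have hu : ∀ (f : ℕ → ℤ), (∀ j, f j = 0) → qdimD r k f = 1 := fun f hf => by
    rw [show f = 0 from funext hf, hz]
  rw [zD]
  split_ifs
  · exact hu _ fun j => by simp
  · simp [Finset.filter_true_of_mem, hu]
  · simp [Finset.filter_true_of_mem, hu]

/-- `z^{(a)}_{k + h} = z^{(a)}_0` for the nodes `a ≤ r - 2`. -/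
theorem zD_period (r k a : ℕ) (ha : a + 2 ≤ r) : zD r k a (k + 2 * r - 2) = zD r k a 0 := by
  have hN : k + 2 * r - 2 ≠ 0 := by omega
  have hper := cosRow_add_period hN r
  have hrefl := cosRow_sub hN r
  rcases Nat.even_or_odd' a with ⟨s, rfl | rfl⟩
  · rw [zD_even r k s _ ha, zD_even r k s _ ha, gappedSum_adjacentBivector _ _ hper hrefl]
  · rw [zD_odd r k s _ ha, zD_odd r k s _ ha, gappedSum_adjacentBivector _ _ hper hrefl,
      add_comm (k + 2 * r - 2) (r - 1), hper, zero_add]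

end QuantumDimension

/-- The quantum dimension solution of type `D_r` satisfies `z^{(a)}_{k+h} = 1` for
`1 ≤ a ≤ r-2`, and `z^{(r-1)}_{k+h} = z^{(r)}_{k+h} = ±1`, where `h = 2r - 2`. -/
theorem stmt17 (r k : ℕ) (hr : 4 ≤ r) (hk : 1 ≤ k) :
    (∀ a : ℕ, 1 ≤ a → a ≤ r - 2 → zD r k a (k + 2 * r - 2) = 1) ∧
    zD r k (r - 1) (k + 2 * r - 2) = zD r k r (k + 2 * r - 2) ∧
    (zD r k (r - 1) (k + 2 * r - 2) = 1 ∨ zD r k (r - 1) (k + 2 * r - 2) = -1) := by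
  have hspin : ∀ a, a = r - 1 ∨ a = r → zD r k a (k + 2 * r - 2) =
      (-1) ^ ((Finset.Icc 1 r ×ˢ Finset.Icc 1 r).filter (fun p => p.1 < p.2)).card :=
    fun a ha => by
      rw [zD, if_pos ha]
      exact qdimD_eq_neg_one_pow r k hk _ (cos_uCoord_spin r k (by omega) hk a ha)
  refine ⟨fun a _ ha => ?_, ?_, ?_⟩
  · rw [zD_period r k a (by omega), zD_zero r k a hk]
  · rw [hspin _ (Or.inl rfl), hspin _ (Or.inr rfl)]
  · rw [hspin _ (Or.inl rfl)]
    exact neg_one_pow_eq_or ℝ _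
end
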